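/- Let (Δ_1,…,Δ_d) be pairwise disjoint closed intervals and (μ_1,…,μ_d) positive compactly supported Borel measures with μ_i ∈ USz(Δ_i) for each i. Let (Δ_{n,1},…,Δ_{n,d}), n ∈ ℕ, be collections of pairwise disjoint closed intervals with Δ_{n,i} ⊆ Δ(μ_i) and Δ_{n,i} → Δ_i as n→∞ for each i. Then S_{n,i}(z) → S_i(z) as n→∞ locally uniformly in D_{Δ_i} for each i, where (S_i)_{i=1}^d and (S_{n,i})_{i=1}^d are the unique collections of conjugate-symmetric outer functions in H²(D_{Δ_i}), resp. H²(D_{Δ_{n,i}}), positive at infinity, satisfying |S_{i±}(x)|² ∏_{j≠i} S_j(x) = v_{Δ_i}(x) a.e. on Δ_i (resp. the same relation for the intervals Δ_{n,i}). -/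

import Mathlib

open MeasureTheory Set Filter Topology Polynomial

noncomputable section

/-- The arcsine distribution `dω_[a,b](x) = dx/(π √((x−a)(b−x)))` on `[a,b]`. -/
def arcsineMeasure (a b : ℝ) : Measure ℝ :=
  (volume.restrict (Set.Icc a b)).withDensity
    fun x => ENNReal.ofReal (1 / (Real.pi * Real.sqrt ((x - a) * (b - x))))

/-- The branch of `√((z−a)(z−b))` holomorphic off `[a,b]` with `w(z) = z + O(1)` at `∞`. -/
def wBranch (a b : ℝ) (z : ℂ) : ℂ :=
  (z - a) * Complex.exp ((1 / 2 : ℂ) * Complex.log ((z - b) / (z - a)))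

/-- Cauchy transform `∫ u(x)/(z−x) dω_[a,b](x)`. -/
def cauchyT (a b : ℝ) (u : ℝ → ℝ) (z : ℂ) : ℂ :=
  ∫ x, (u x : ℂ) / (z - (x : ℂ)) ∂(arcsineMeasure a b)

/-- `H_Δ u`, the harmonic extension of `u` off `Δ = [a,b]`. -/
def harmExt (a b : ℝ) (u : ℝ → ℝ) (z : ℂ) : ℝ :=
  (wBranch a b z * cauchyT a b u z).re

/-- The outer function `Ω_Δ(f,z) := exp( w_Δ(z) ∫ log f(x)/(z−x) dω_Δ(x) )`. -/
def OmegaFun (a b : ℝ) (f : ℝ → ℝ) (z : ℂ) : ℂ :=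
  Complex.exp (wBranch a b z * cauchyT a b (fun x => Real.log (f x)) z)

/-- The value of `Ω_Δ(f,·)` at infinity: `exp( ∫ log f dω_Δ )`. -/
def OmegaInf (a b : ℝ) (f : ℝ → ℝ) : ℝ :=
  Real.exp (∫ x, Real.log (f x) ∂(arcsineMeasure a b))

/-- Radon–Nikodym derivative `μ′` of `μ` with respect to Lebesgue measure. -/
def lebDeriv (μ : Measure ℝ) (x : ℝ) : ℝ := (μ.rnDeriv volume x).toReal

/-- `v_Δ(x) = π μ′(x) √((x−a)(b−x))`, the density of `μ|_Δ` w.r.t. the arcsine law. -/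
def vDens (μ : Measure ℝ) (a b : ℝ) (x : ℝ) : ℝ :=
  Real.pi * lebDeriv μ x * Real.sqrt ((x - a) * (b - x))

/-- Szegő function `G(e^h μ|_[a,b], z)`. -/
def szegoG (μ : Measure ℝ) (a b : ℝ) (h : ℝ → ℝ) (z : ℂ) : ℂ :=
  OmegaFun a b (fun x => Real.sqrt (Real.exp (h x) * vDens μ a b x)) z

/-- Szegő function `G(e^h μ|_[a,b], ·)` at infinity. -/
def szegoGInf (μ : Measure ℝ) (a b : ℝ) (h : ℝ → ℝ) : ℝ :=
  OmegaInf a b fun x => Real.sqrt (Real.exp (h x) * vDens μ a b x)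

/-- Support of a measure on `ℝ`. -/
def msupp (μ : Measure ℝ) : Set ℝ := {x | ∀ ε > 0, 0 < μ (Metric.ball x ε)}

def suppInf (μ : Measure ℝ) : ℝ := sInf (msupp μ)
def suppSup (μ : Measure ℝ) : ℝ := sSup (msupp μ)

/-- `Δ(μ)`, the convex hull of the support of `μ`. -/
def convHullSupp (μ : Measure ℝ) : Set ℝ := Set.Icc (suppInf μ) (suppSup μ)

/-- Logarithmic potential `V^ω(x) = −∫ log|x−t| dω(t)`. -/
def logPot (ω : Measure ℝ) (x : ℝ) : ℝ := -∫ t, Real.log |x - t| ∂ω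

/-- The Szegő condition `μ ∈ Sz([a,b])`. -/
def SzCond (μ : Measure ℝ) (a b : ℝ) : Prop :=
  Integrable (fun x => Real.log (lebDeriv μ x)) (arcsineMeasure a b)

/-- The increasing affine map of `[a,b]` onto `[c,d]`. -/
def affIcc (a b c d : ℝ) (x : ℝ) : ℝ := c + ((d - c) / (b - a)) * (x - a)

/-- The uniform Szegő condition `μ ∈ USz([a,b])`. -/
def USzCond (μ : Measure ℝ) (a b : ℝ) : Prop :=
  SzCond μ a b ∧
  ∀ A B : ℕ → ℝ, (∀ n, A n < B n) → (∀ n, Set.Icc (A n) (B n) ⊆ convHullSupp μ) →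
    Tendsto A atTop (𝓝 a) → Tendsto B atTop (𝓝 b) →
    (∀ᶠ n in atTop, SzCond μ (A n) (B n)) ∧
    Tendsto (fun n => ∫ x,
        |Real.log (lebDeriv μ x) - Real.log (lebDeriv μ (affIcc a b (A n) (B n) x))|
          ∂(arcsineMeasure a b)) atTop (𝓝 0)

/-- `P` is the `n`-th monic orthogonal polynomial with respect to `ν`. -/
def IsMonicOP (ν : Measure ℝ) (n : ℕ) (P : Polynomial ℝ) : Prop :=
  P.Monic ∧ P.natDegree = n ∧ ∀ k < n, ∫ x, x ^ k * P.eval x ∂ν = 0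

/-- The weighted measure `e^θ μ`. -/
def expWt (μ : Measure ℝ) (θ : ℝ → ℝ) : Measure ℝ :=
  μ.withDensity fun x => ENNReal.ofReal (Real.exp (θ x))

/-- An Angelesco system of `d` measures, with `Δ(μ_i) = [lo i, hi i]`. -/
structure Angelesco (d : ℕ) (μ : Fin d → Measure ℝ) (lo hi : Fin d → ℝ) : Prop where
  two_le : 2 ≤ d
  bounded : ∀ i, Bornology.IsBounded (msupp (μ i))
  infinite : ∀ i, (msupp (μ i)).Infinite
  lo_eq : ∀ i, lo i = suppInf (μ i)
  hi_eq : ∀ i, hi i = suppSup (μ i)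
  sep : ∀ i j, i < j → hi i < lo j

/-- The vector equilibrium measure `(ω_1,…,ω_d)` with parameter `c`,
with `supp ω_i = [A i, B i] ⊆ [lo i, hi i]` and masses `c i`. -/
structure VecEquil (d : ℕ) (lo hi : Fin d → ℝ) (c : Fin d → ℝ)
    (ω : Fin d → Measure ℝ) (A B : Fin d → ℝ) : Prop where
  endpoints : ∀ i, lo i ≤ A i ∧ A i < B i ∧ B i ≤ hi i
  supp : ∀ i, msupp (ω i) = Set.Icc (A i) (B i)
  mass : ∀ i, ω i Set.univ = ENNReal.ofReal (c i)
  equil : ∀ j, ∃ ℓ : ℝ,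
    (∀ x ∈ Set.Icc (A j) (B j), logPot (ω j) x + ∑ i, logPot (ω i) x = ℓ) ∧
    (∀ x ∈ Set.Icc (lo j) (hi j) \ Set.Icc (A j) (B j),
        ℓ < logPot (ω j) x + ∑ i, logPot (ω i) x)

/-- The vector `(S_1,…,S_d)` of conjugate-symmetric outer functions in `H²(D_{Δ_i})`,
positive at infinity, with boundary moduli `g_i` satisfying
`|S_{i±}|² ∏_{j≠i} S_j = v_i` a.e. on `Δ_i` (outer functions positive at infinity are
recovered from their boundary moduli by `S_i = Ω_{Δ_i}(g_i, ·)`). -/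
def IsSzegoVector (d : ℕ) (A B : Fin d → ℝ) (v : Fin d → ℝ → ℝ)
    (g : Fin d → ℝ → ℝ) (S : Fin d → ℂ → ℂ) : Prop :=
  (∀ i x, 0 ≤ g i x) ∧
  (∀ i, Integrable (fun x => Real.log (g i x)) (arcsineMeasure (A i) (B i))) ∧
  (∀ i, S i = fun z => OmegaFun (A i) (B i) (g i) z) ∧
  (∀ i, ∀ᵐ x ∂(arcsineMeasure (A i) (B i)),
    (g i x) ^ 2 * ∏ j ∈ Finset.univ.erase i, (S j (x : ℂ)).re = v i x)

/-- The operator `ℋ` with component `i` equal to `−(1/2) Σ_{j≠i} H_{[A j, B j]} u_j`. -/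
def calH (d : ℕ) (A B : Fin d → ℝ) (u : Fin d → ℝ → ℝ) (i : Fin d) (x : ℝ) : ℝ :=
  -(1 / 2) * ∑ j ∈ Finset.univ.erase i, harmExt (A j) (B j) (u j) (x : ℂ)

/-- sup norm over `[a,b]`. -/
def supIcc (a b : ℝ) (f : ℝ → ℝ) : ℝ := sSup ((fun x => |f x|) '' Set.Icc a b)

/-- Norm of `C(Δ⃗)`. -/
def vecCNorm (d : ℕ) (A B : Fin d → ℝ) (u : Fin d → ℝ → ℝ) : ℝ :=
  ∑ i, supIcc (A i) (B i) (u i)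

/-- Norm of `C¹(Δ⃗)`. -/
def vecC1Norm (d : ℕ) (A B : Fin d → ℝ) (u : Fin d → ℝ → ℝ) : ℝ :=
  ∑ i, (supIcc (A i) (B i) (u i) +
    supIcc (A i) (B i) (derivWithin (u i) (Set.Icc (A i) (B i))))

/-- membership in `C(Δ⃗)`. -/
def memVecC (d : ℕ) (A B : Fin d → ℝ) (u : Fin d → ℝ → ℝ) : Prop :=
  ∀ i, ContinuousOn (u i) (Set.Icc (A i) (B i))

/-- membership in `C¹(Δ⃗)`. -/
def memVecC1 (d : ℕ) (A B : Fin d → ℝ) (u : Fin d → ℝ → ℝ) : Prop :=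
  ∀ i, ContDiffOn ℝ 1 (u i) (Set.Icc (A i) (B i))

/-- `|w_Δ(x)|` for real `x`. -/
def wAbs (p q x : ℝ) : ℝ := Real.sqrt |(x - p) * (x - q)|

/-- Riemann–Liouville type fractional integral of order 1/2. -/
def fracInt (γ : ℝ) (θ : ℝ → ℝ) (x : ℝ) : ℝ :=
  (Real.sqrt Real.pi)⁻¹ * ∫ t in γ..x, θ t / Real.sqrt |x - t|

/-!
The parametrization `x = (a + b) / 2 + (b - a) / 2 * Re e` of an interval by the unit circle turns
its arcsine law into Haar measure, and turns the boundary relation, after taking logarithms, into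
a linear integral equation `u = F + θ Kᵀ u` for the family `u` of the functions `log g i`. The
kernel `K` couples different intervals only, so it is continuous, jointly with the endpoints; `θ`
is the indicator of `{v ≠ 0}`, which appears because `log 0 = 0`.

Each `S i` is the exponential of a pairing of `u` with a continuous function, so it suffices that
the functionals `φ f = ∫ f u` on continuous functions converge in norm. They solve
`φ ∘ (1 - K θ) = ∫ · F` with `K θ` compact. If `ψ = K θ ψ`, sweeping the charges `θ ψ` onto the
`i`-th interval gives the density `(θ i - 2) ψ i`, which cannot be negative where the potential of
the charges is maximal; so `ψ i ≤ 0` there, and the maximum principle together with the behaviour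
at infinity makes the potential vanish and then `ψ = 0`. Hence `1 - K θ` is invertible. The uniform
Szegő condition makes `F` and `θ` converge in `L¹`, hence `K θ` in operator norm, and inversion is
continuous there.
-/

instance : MeasurableSpace Circle := borel Circle

instance : BorelSpace Circle := ⟨rfl⟩

/-- The circle carries the rotation-invariant probability measure. -/
instance : MeasureSpace Circle := ⟨(volume : Measure UnitAddCircle).map AddCircle.toCircle⟩

theorem isHomeomorph_toCircle :
    IsHomeomorph (AddCircle.toCircle : UnitAddCircle → Circle) :=
  isHomeomorph_iff_exists_homeomorph.2
    ⟨AddCircle.homeomorphCircle one_ne_zero, funext (AddCircle.homeomorphCircle_apply one_ne_zero)⟩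

theorem measurableEmbedding_toCircle :
    MeasurableEmbedding (AddCircle.toCircle : UnitAddCircle → Circle) :=
  isHomeomorph_toCircle.isClosedEmbedding.measurableEmbedding

theorem measurePreserving_toCircle :
    MeasurePreserving (AddCircle.toCircle : UnitAddCircle → Circle) :=
  ⟨measurableEmbedding_toCircle.measurable, rfl⟩

instance : IsProbabilityMeasure (volume : Measure Circle) :=
  ⟨(measurePreserving_toCircle.measure_preimage MeasurableSet.univ.nullMeasurableSet).symm.trans
    UnitAddCircle.measure_univ⟩

instance : (volume : Measure Circle).IsOpenPosMeasure :=
  isHomeomorph_toCircle.continuous.isOpenPosMeasure_map isHomeomorph_toCircle.surjective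

instance : (volume : Measure Circle).IsInvInvariant where
  inv_eq_self := by
    refine (Measure.map_map measurable_inv measurableEmbedding_toCircle.measurable).trans ?_
    have h : (fun e : Circle => e⁻¹) ∘ AddCircle.toCircle =
        (AddCircle.toCircle : UnitAddCircle → Circle) ∘ fun x => -x := by
      ext x
      simp only [Function.comp_apply, AddCircle.toCircle_neg]
    change Measure.map ((fun e : Circle => e⁻¹) ∘ _) _ = _
    rw [h, ← Measure.map_map measurableEmbedding_toCircle.measurable measurable_neg,
      Measure.map_neg_eq_self]
    rfl

theorem toCircle_coe_eq_exp (u : ℝ) :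
    AddCircle.toCircle (u : UnitAddCircle) = Circle.exp (2 * Real.pi * u) := by
  rw [AddCircle.toCircle_apply_mk, div_one]

theorem integral_circle_eq_circleAverage {E : Type*} [NormedAddCommGroup E] [NormedSpace ℝ E]
    (F : ℂ → E) : ∫ e : Circle, F e = Real.circleAverage F 0 1 := by
  have h := measurePreserving_toCircle.integral_comp measurableEmbedding_toCircle
    fun e : Circle => F e
  rw [← h, ← UnitAddCircle.intervalIntegral_preimage 0]
  simp only [toCircle_coe_eq_exp, Circle.coe_exp, zero_add]
  rw [intervalIntegral.integral_comp_mul_left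
    (fun t : ℝ => F (Complex.exp (t * Complex.I))) Real.two_pi_pos.ne']
  simp only [mul_zero, mul_one, Real.circleAverage, circleMap, zero_add, Complex.ofReal_one,
    one_mul]

@[fun_prop]
theorem measurable_circle_coe : Measurable fun e : Circle => (e : ℂ) :=
  Continuous.measurable (by fun_prop)

theorem integrable_circle_of_circleIntegrable {F : ℂ → ℝ} (hF : Measurable F)
    (h : CircleIntegrable F 0 1) : Integrable fun e : Circle => F e := by
  have hm : Measurable fun e : Circle => F e := hF.comp measurable_circle_coe
  rw [← measurePreserving_toCircle.integrable_comp_emb measurableEmbedding_toCircle,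
    ← (UnitAddCircle.measurePreserving_mk 0).integrable_comp
      (hm.comp measurableEmbedding_toCircle.measurable).aestronglyMeasurable]
  have h' := (IntervalIntegrable.comp_mul_left (c := 2 * Real.pi) h).1
  simp only [zero_div, div_self Real.two_pi_pos.ne'] at h'
  rw [zero_add]
  refine h'.congr (.of_forall fun u => ?_)
  simp [toCircle_coe_eq_exp, circleMap]

theorem lintegral_circle (F : Circle → ENNReal) :
    ∫⁻ e, F e = ∫⁻ u in Ioc (-(1 / 2) : ℝ) (1 / 2), F (Circle.exp (2 * Real.pi * u)) := by
  rw [← measurePreserving_toCircle.lintegral_comp_emb measurableEmbedding_toCircle,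
    ← UnitAddCircle.lintegral_preimage (-(1 / 2))]
  norm_num [toCircle_coe_eq_exp]

/-- The image of a point of the circle under the Joukowski projection onto `[a, b]`. -/
def intervalPoint (a b : ℝ) (e : Circle) : ℝ := (a + b) / 2 + (b - a) / 2 * (e : ℂ).re

@[fun_prop]
theorem continuous_intervalPoint (a b : ℝ) : Continuous (intervalPoint a b) := by
  unfold intervalPoint; fun_prop

theorem intervalPoint_exp (a b t : ℝ) :
    intervalPoint a b (Circle.exp t) = (a + b) / 2 + (b - a) / 2 * Real.cos t := by
  rw [intervalPoint, Circle.coe_exp, Complex.exp_ofReal_mul_I_re]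

theorem circle_re_mem_Icc (e : Circle) : (e : ℂ).re ∈ Icc (-1 : ℝ) 1 :=
  abs_le.1 <| (Complex.abs_re_le_norm _).trans_eq e.norm_coe

theorem circle_re_sq_add_im_sq (e : Circle) : (e : ℂ).re ^ 2 + (e : ℂ).im ^ 2 = 1 := by
  have h := Circle.normSq_coe e
  rw [Complex.normSq_apply] at h
  linarith

theorem intervalPoint_mem_Icc {a b : ℝ} (hab : a ≤ b) (e : Circle) :
    intervalPoint a b e ∈ Icc a b := by
  obtain ⟨h₁, h₂⟩ := circle_re_mem_Icc e
  constructor <;> unfold intervalPoint <;> nlinarith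

theorem exists_intervalPoint_eq {a b x : ℝ} (hab : a < b) (hx : x ∈ Icc a b) :
    ∃ e, intervalPoint a b e = x := by
  have h : 0 < (b - a) / 2 := by linarith
  refine ⟨Circle.exp (Real.arccos ((x - (a + b) / 2) / ((b - a) / 2))), ?_⟩
  rw [intervalPoint_exp, Real.cos_arccos, mul_div_cancel₀ _ h.ne', add_sub_cancel]
  · rw [le_div_iff₀ h]; linarith [hx.1]
  · rw [div_le_iff₀ h]; linarith [hx.2]

theorem sqrt_intervalPoint {a b : ℝ} (hab : a ≤ b) (e : Circle) :
    Real.sqrt ((intervalPoint a b e - a) * (b - intervalPoint a b e)) =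
      (b - a) / 2 * |(e : ℂ).im| := by
  have h : (intervalPoint a b e - a) * (b - intervalPoint a b e) =
      ((b - a) / 2 * (e : ℂ).im) ^ 2 := by
    unfold intervalPoint
    linear_combination -((b - a) / 2) ^ 2 * circle_re_sq_add_im_sq e
  rw [h, Real.sqrt_sq_eq_abs, abs_mul, abs_of_nonneg (by linarith)]

theorem bijOn_cos_two_pi_mul :
    BijOn (fun u : ℝ => Real.cos (2 * Real.pi * u)) (Ioo 0 (1 / 2)) (Ioo (-1) 1) := by
  have hscale : BijOn (fun u : ℝ => 2 * Real.pi * u) (Ioo 0 (1 / 2)) (Ioo 0 Real.pi) := by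
    have h := image_mul_left_Ioo Real.two_pi_pos (0 : ℝ) (1 / 2)
    rw [mul_zero, show 2 * Real.pi * (1 / 2) = Real.pi by ring] at h
    exact ⟨h ▸ mapsTo_image _ _, (mul_right_injective₀ Real.two_pi_pos.ne').injOn, h.ge⟩
  exact Real.cosPartialHomeomorph.bijOn.comp hscale

theorem bijOn_intervalPoint_exp {a b : ℝ} (hab : a < b) :
    BijOn (fun u : ℝ => intervalPoint a b (Circle.exp (2 * Real.pi * u)))
      (Ioo 0 (1 / 2)) (Ioo a b) := by
  have h : 0 < (b - a) / 2 := by linarith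
  have haffine : BijOn (fun s => (b - a) / 2 * s + (a + b) / 2) (Ioo (-1) 1) (Ioo a b) := by
    have himage := image_affine_Ioo h ((a + b) / 2) (-1) 1
    rw [show (b - a) / 2 * -1 + (a + b) / 2 = a by ring,
      show (b - a) / 2 * 1 + (a + b) / 2 = b by ring] at himage
    exact ⟨himage ▸ mapsTo_image _ _,
      ((add_left_injective _).comp (mul_right_injective₀ h.ne')).injOn, himage.ge⟩
  refine (haffine.comp bijOn_cos_two_pi_mul).congr fun u _ => ?_
  rw [Function.comp_apply, intervalPoint_exp, add_comm]

theorem lintegral_arcsineMeasure {a b : ℝ} (hab : a < b) {f : ℝ → ENNReal} (hf : Measurable f) :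
    ∫⁻ x, f x ∂arcsineMeasure a b =
      2 * ∫⁻ u in Ioo (0 : ℝ) (1 / 2), f (intervalPoint a b (Circle.exp (2 * Real.pi * u))) := by
  have hderiv : ∀ u ∈ Ioo (0 : ℝ) (1 / 2), HasDerivWithinAt
      (fun u : ℝ => intervalPoint a b (Circle.exp (2 * Real.pi * u)))
      ((b - a) / 2 * (-Real.sin (2 * Real.pi * u) * (2 * Real.pi))) (Ioo 0 (1 / 2)) u := by
    intro u _
    simp only [intervalPoint_exp]
    simpa using ((((hasDerivAt_id u).const_mul (2 * Real.pi)).cos.const_mul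
      ((b - a) / 2)).const_add ((a + b) / 2)).hasDerivWithinAt
  have hbij := bijOn_intervalPoint_exp hab
  rw [arcsineMeasure, lintegral_withDensity_eq_lintegral_mul _ (by fun_prop) hf,
    setLIntegral_congr Ioo_ae_eq_Icc.symm, ← hbij.image_eq,
    lintegral_image_eq_lintegral_abs_deriv_mul measurableSet_Ioo hderiv hbij.injOn,
    ← lintegral_const_mul' _ _ ENNReal.ofNat_ne_top]
  refine setLIntegral_congr_fun measurableSet_Ioo fun u hu => ?_
  have hsin : 0 < Real.sin (2 * Real.pi * u) :=
    Real.sin_pos_of_pos_of_lt_pi (by have := hu.1; positivity)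
      (by nlinarith [Real.pi_pos, hu.2])
  have hlen : 0 < (b - a) / 2 := by linarith
  simp only [Pi.mul_apply]
  rw [sqrt_intervalPoint hab.le, ← mul_assoc, ← ENNReal.ofReal_mul (abs_nonneg _),
    Circle.coe_exp, Complex.exp_ofReal_mul_I_im, abs_of_pos hsin, abs_mul, abs_mul, abs_neg,
    abs_of_pos hsin, abs_of_pos hlen, abs_of_pos Real.two_pi_pos]
  congr 1
  rw [← ENNReal.ofReal_ofNat]
  congr 1
  have hpi := Real.pi_ne_zero
  have hne : b - a ≠ 0 := sub_ne_zero.2 hab.ne'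
  field_simp

theorem map_intervalPoint {a b : ℝ} (hab : a < b) :
    (volume : Measure Circle).map (intervalPoint a b) = arcsineMeasure a b := by
  refine Measure.ext_of_lintegral _ fun f hf => ?_
  rw [lintegral_map hf (continuous_intervalPoint a b).measurable, lintegral_circle,
    lintegral_arcsineMeasure hab hf]
  set G : ℝ → ENNReal := fun u => f (intervalPoint a b (Circle.exp (2 * Real.pi * u)))
  have heven : ∀ u, G (-u) = G u := fun u => by
    simp only [G, intervalPoint_exp, mul_neg, Real.cos_neg]
  have hleft : ∫⁻ u in Ioc (-(1 / 2) : ℝ) 0, G u = ∫⁻ u in Ioo (0 : ℝ) (1 / 2), G u := by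
    have h := (Measure.measurePreserving_neg (volume : Measure ℝ)).setLIntegral_comp_preimage_emb
      (MeasurableEquiv.neg ℝ).measurableEmbedding G (Ioc (-(1 / 2)) 0)
    have hpre : Neg.neg ⁻¹' Ioc (-(1 / 2) : ℝ) 0 = Ico 0 (1 / 2) := by
      rw [neg_preimage, neg_Ioc, neg_zero, neg_neg]
    simp only [heven, hpre] at h
    rw [← h, setLIntegral_congr Ioo_ae_eq_Ico.symm]
  rw [← Ioc_union_Ioc_eq_Ioc (by norm_num : (-(1 / 2) : ℝ) ≤ 0) (by norm_num),
    lintegral_union measurableSet_Ioc (Ioc_disjoint_Ioc_of_le le_rfl), hleft,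
    setLIntegral_congr Ioo_ae_eq_Ioc.symm, ← two_mul]

theorem integral_arcsineMeasure {E : Type*} [NormedAddCommGroup E] [NormedSpace ℝ E] {a b : ℝ}
    (hab : a < b) {f : ℝ → E} (hf : AEStronglyMeasurable f (arcsineMeasure a b)) :
    ∫ x, f x ∂arcsineMeasure a b = ∫ e : Circle, f (intervalPoint a b e) := by
  rw [← map_intervalPoint hab] at hf ⊢
  exact integral_map (continuous_intervalPoint a b).aemeasurable hf

theorem measurePreserving_intervalPoint {a b : ℝ} (hab : a < b) :
    MeasurePreserving (intervalPoint a b) volume (arcsineMeasure a b) :=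
  ⟨(continuous_intervalPoint a b).measurable, map_intervalPoint hab⟩

/-- The Joukowski map `ρ ↦ (a + b) / 2 + (b - a) / 2 * (ρ + ρ⁻¹) / 2`, which carries the punctured
unit disc onto the complement of `[a, b]`. -/
def joukowski (a b : ℝ) (ρ : ℂ) : ℂ := (a + b) / 2 + (b - a) / 2 * ((ρ + ρ⁻¹) / 2)

theorem joukowski_circle (a b : ℝ) (e : Circle) : joukowski a b e = intervalPoint a b e := by
  have h : ((e : ℂ) + (e : ℂ)⁻¹) / 2 = ((e : ℂ).re : ℂ) := by
    rw [← Circle.coe_inv, Circle.coe_inv_eq_conj, Complex.re_eq_add_conj]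
  rw [joukowski, intervalPoint, h]
  push_cast
  rfl

theorem intervalPoint_inv (a b : ℝ) (e : Circle) : intervalPoint a b e⁻¹ = intervalPoint a b e := by
  rw [intervalPoint, Circle.coe_inv_eq_conj, Complex.conj_re, intervalPoint]

theorem exists_joukowski_eq {a b : ℝ} (hab : a < b) (z : ℂ) :
    ∃ ρ : ℂ, ρ ≠ 0 ∧ ‖ρ‖ ≤ 1 ∧ joukowski a b ρ = z := by
  have hba : (b : ℂ) - a ≠ 0 := sub_ne_zero.2 (Complex.ofReal_injective.ne hab.ne')
  set ζ := (z - (a + b) / 2) / ((b - a) / 2)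
  have hζ : ∀ ρ σ : ℂ, ρ * σ = 1 → ρ + σ = 2 * ζ → joukowski a b ρ = z := fun ρ σ h₁ h₂ => by
    rw [joukowski, ← eq_inv_of_mul_eq_one_right h₁, h₂]
    simp only [ζ]
    field_simp
    ring
  obtain ⟨w, hw⟩ := IsAlgClosed.exists_pow_nat_eq (ζ ^ 2 - 1) two_pos
  have hp : (ζ - w) * (ζ + w) = 1 := by linear_combination -hw
  rcases le_total ‖ζ - w‖ 1 with h | h
  · exact ⟨ζ - w, left_ne_zero_of_mul_eq_one hp, h, hζ _ _ hp (by ring)⟩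
  · refine ⟨ζ + w, right_ne_zero_of_mul_eq_one hp, ?_, hζ _ _ ((mul_comm _ _).trans hp) (by ring)⟩
    rw [eq_inv_of_mul_eq_one_right hp, norm_inv]
    exact inv_le_one_of_one_le₀ h

theorem exists_joukowski_eq_of_notMem {a b : ℝ} (hab : a < b) {z : ℂ}
    (hz : z ∉ Complex.ofReal '' Icc a b) : ∃ ρ : ℂ, ρ ≠ 0 ∧ ‖ρ‖ < 1 ∧ joukowski a b ρ = z := by
  obtain ⟨ρ, h₀, h₁, rfl⟩ := exists_joukowski_eq hab z
  refine ⟨ρ, h₀, h₁.lt_of_ne fun h => hz ?_, rfl⟩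
  exact ⟨_, intervalPoint_mem_Icc hab.le ⟨ρ, mem_sphere_zero_iff_norm.2 h⟩,
    (joukowski_circle a b ⟨ρ, _⟩).symm⟩

theorem joukowski_sub_left {a b : ℝ} {ρ : ℂ} (hρ : ρ ≠ 0) :
    joukowski a b ρ - a = (b - a) / 4 * (1 + ρ) ^ 2 / ρ := by
  rw [joukowski]
  field_simp
  ring

theorem joukowski_sub_right {a b : ℝ} {ρ : ℂ} (hρ : ρ ≠ 0) :
    joukowski a b ρ - b = (b - a) / 4 * (1 - ρ) ^ 2 / ρ := by
  rw [joukowski]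
  field_simp
  ring

theorem joukowski_sub_intervalPoint (a b : ℝ) {ρ : ℂ} (hρ : ρ ≠ 0) (e : Circle) :
    joukowski a b ρ - intervalPoint a b e =
      (b - a) / 4 * ((e - ρ) * ((e⁻¹ : Circle) - ρ)) / ρ := by
  have he := e.coe_ne_zero
  rw [← joukowski_circle, joukowski, joukowski, Circle.coe_inv]
  field_simp
  ring

theorem norm_ofReal_sub_div_four {a b : ℝ} (hab : a ≤ b) : ‖((b : ℂ) - a) / 4‖ = (b - a) / 4 := by
  rw [← Complex.ofReal_sub, ← Complex.ofReal_ofNat, ← Complex.ofReal_div,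
    Complex.norm_of_nonneg (by linarith)]

theorem log_norm_joukowski_sub_intervalPoint {a b : ℝ} (hab : a < b) {ρ : ℂ} (hρ : ρ ≠ 0)
    {e : Circle} (h₁ : (e : ℂ) ≠ ρ) (h₂ : ((e⁻¹ : Circle) : ℂ) ≠ ρ) :
    Real.log ‖joukowski a b ρ - intervalPoint a b e‖ =
      Real.log ((b - a) / 4) - Real.log ‖ρ‖ +
        (Real.log ‖(e : ℂ) - ρ‖ + Real.log ‖((e⁻¹ : Circle) : ℂ) - ρ‖) := by
  have h₁' := (norm_pos_iff.2 (sub_ne_zero.2 h₁)).ne'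
  have h₂' := (norm_pos_iff.2 (sub_ne_zero.2 h₂)).ne'
  have h₀ : (b - a) / 4 ≠ 0 := by linarith
  rw [joukowski_sub_intervalPoint a b hρ, norm_div, norm_mul, norm_mul,
    norm_ofReal_sub_div_four hab.le,
    Real.log_div (by positivity) (norm_pos_iff.2 hρ).ne', Real.log_mul h₀ (by positivity),
    Real.log_mul h₁' h₂']
  ring

theorem ae_circle_coe_ne (w : ℂ) : ∀ᵐ e : Circle, (e : ℂ) ≠ w := by
  have hp := measurePreserving_toCircle.comp (UnitAddCircle.measurePreserving_mk 0)
  have hset : MeasurableSet {e : Circle | (e : ℂ) = w} :=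
    (isClosed_eq (by fun_prop) continuous_const).measurableSet
  have hcount : ({u : ℝ | circleMap 0 1 (2 * Real.pi * u) ∈ ({w} : Set ℂ)}).Countable :=
    ((countable_singleton w).preimage_circleMap 0 one_ne_zero).preimage_of_injOn
      (mul_right_injective₀ Real.two_pi_pos.ne').injOn
  rw [ae_iff]
  simp only [not_not]
  rw [← hp.measure_preimage hset.nullMeasurableSet]
  refine measure_mono_null (fun u hu => ?_) (hcount.measure_zero _)
  simpa [toCircle_coe_eq_exp, circleMap] using hu

theorem ae_circle_coe_inv_ne (w : ℂ) : ∀ᵐ e : Circle, ((e⁻¹ : Circle) : ℂ) ≠ w :=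
  (Measure.measurePreserving_inv volume).quasiMeasurePreserving.ae (ae_circle_coe_ne w)

theorem integrable_log_norm_circle_sub (w : ℂ) :
    Integrable fun e : Circle => Real.log ‖(e : ℂ) - w‖ :=
  integrable_circle_of_circleIntegrable (F := fun z => Real.log ‖z - w‖) (by fun_prop)
    (circleIntegrable_log_norm_sub_const 1)

theorem integral_log_norm_circle_sub (w : ℂ) :
    ∫ e : Circle, Real.log ‖(e : ℂ) - w‖ = Real.posLog ‖w‖ := by
  rw [integral_circle_eq_circleAverage fun z => Real.log ‖z - w‖,
    circleAverage_log_norm_sub_const_eq_posLog]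

/-- The Green function of the complement of `[a, b]` with pole at infinity. -/
def greenInterval (a b : ℝ) (z : ℂ) : ℝ := Real.arcosh ((‖z - a‖ + ‖z - b‖) / (b - a))

theorem one_le_norm_sub_add_norm_sub_div {a b : ℝ} (hab : a < b) (z : ℂ) :
    1 ≤ (‖z - a‖ + ‖z - b‖) / (b - a) := by
  rw [one_le_div (sub_pos.2 hab)]
  calc b - a = ‖(z - a) - (z - b)‖ := by
        rw [sub_sub_sub_cancel_left, ← Complex.ofReal_sub, Complex.norm_of_nonneg (by linarith)]
    _ ≤ _ := norm_sub_le _ _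

theorem continuous_greenInterval {a b : ℝ} (hab : a < b) : Continuous (greenInterval a b) :=
  Real.continuousOn_arcosh.comp_continuous (by fun_prop) (one_le_norm_sub_add_norm_sub_div hab)

theorem greenInterval_nonneg {a b : ℝ} (hab : a < b) (z : ℂ) : 0 ≤ greenInterval a b z :=
  Real.arcosh_nonneg (one_le_norm_sub_add_norm_sub_div hab z)

theorem greenInterval_joukowski {a b : ℝ} (hab : a < b) {ρ : ℂ} (h₀ : ρ ≠ 0) (h₁ : ‖ρ‖ ≤ 1) :
    greenInterval a b (joukowski a b ρ) = -Real.log ‖ρ‖ := by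
  have hpos := norm_pos_iff.2 h₀
  have hsum : (‖joukowski a b ρ - a‖ + ‖joukowski a b ρ - b‖) / (b - a) =
      Real.cosh (-Real.log ‖ρ‖) := by
    have hpar := parallelogram_law_with_norm ℝ (1 : ℂ) ρ
    rw [joukowski_sub_left h₀, joukowski_sub_right h₀, norm_div, norm_div, norm_mul, norm_mul,
    norm_ofReal_sub_div_four hab.le, norm_pow, norm_pow, Real.cosh_neg,
      Real.cosh_log hpos]
    have : b - a ≠ 0 := (sub_pos.2 hab).ne'
    rw [norm_one] at hpar
    field_simp
    linear_combination 2 * hpar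
  rw [greenInterval, hsum, Real.arcosh_cosh (neg_nonneg.2 (Real.log_nonpos hpos.le h₁))]

theorem greenInterval_intervalPoint {a b : ℝ} (hab : a < b) (e : Circle) :
    greenInterval a b (intervalPoint a b e) = 0 := by
  rw [← joukowski_circle, greenInterval_joukowski hab e.coe_ne_zero e.norm_coe.le, e.norm_coe,
    Real.log_one, neg_zero]

theorem integrable_log_norm_sub_intervalPoint {a b : ℝ} (hab : a < b) (z : ℂ) :
    Integrable fun e => Real.log ‖z - intervalPoint a b e‖ := by
  obtain ⟨ρ, h₀, -, rfl⟩ := exists_joukowski_eq hab z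
  have h := integrable_log_norm_circle_sub ρ
  refine ((integrable_const (Real.log ((b - a) / 4) - Real.log ‖ρ‖)).add
    (h.add h.comp_inv)).congr ?_
  filter_upwards [ae_circle_coe_ne ρ, ae_circle_coe_inv_ne ρ] with e h₁ h₂
  exact (log_norm_joukowski_sub_intervalPoint hab h₀ h₁ h₂).symm

theorem integral_log_norm_sub_intervalPoint {a b : ℝ} (hab : a < b) (z : ℂ) :
    ∫ e, Real.log ‖z - intervalPoint a b e‖ =
      Real.log ((b - a) / 4) + greenInterval a b z := by
  obtain ⟨ρ, h₀, hle, rfl⟩ := exists_joukowski_eq hab z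
  have h := integrable_log_norm_circle_sub ρ
  have hae : (fun e => Real.log ‖joukowski a b ρ - intervalPoint a b e‖) =ᵐ[volume] fun e =>
      Real.log ((b - a) / 4) - Real.log ‖ρ‖ +
        (Real.log ‖(e : ℂ) - ρ‖ + Real.log ‖((e⁻¹ : Circle) : ℂ) - ρ‖) := by
    filter_upwards [ae_circle_coe_ne ρ, ae_circle_coe_inv_ne ρ] with e h₁ h₂
    exact log_norm_joukowski_sub_intervalPoint hab h₀ h₁ h₂
  have hzero : ∫ e : Circle, Real.log ‖(e : ℂ) - ρ‖ = 0 := by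
    rw [integral_log_norm_circle_sub, Real.posLog_eq_zero_iff, abs_norm]
    exact hle
  calc ∫ e, Real.log ‖joukowski a b ρ - intervalPoint a b e‖
      = Real.log ((b - a) / 4) - Real.log ‖ρ‖ + ((∫ e : Circle, Real.log ‖(e : ℂ) - ρ‖) +
          ∫ e : Circle, Real.log ‖((e⁻¹ : Circle) : ℂ) - ρ‖) := by
        rw [integral_congr_ae hae]
        refine (integral_add (integrable_const _) (h.add h.comp_inv)).trans ?_
        rw [integral_const, probReal_univ, one_smul]
        exact congrArg _ (integral_add h h.comp_inv)
    _ = _ := by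
        rw [integral_inv_eq_self (fun e : Circle => Real.log ‖(e : ℂ) - ρ‖) volume, hzero,
          greenInterval_joukowski hab h₀ hle]
        ring

/-- The kernel `w_Δ(z) / (z - x)` of `harmExt` and `OmegaFun`, with `x` lifted to the circle. -/
def exteriorKernel (a b : ℝ) (z : ℂ) (e : Circle) : ℂ :=
  wBranch a b z / (z - intervalPoint a b e)

theorem sub_div_sub_mem_slitPlane {a b : ℝ} (hab : a < b) {z : ℂ}
    (hz : z ∉ Complex.ofReal '' Icc a b) : (z - b) / (z - a) ∈ Complex.slitPlane := by
  have hza : z - a ≠ 0 := fun h => hz ⟨a, left_mem_Icc.2 hab.le, (sub_eq_zero.1 h).symm⟩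
  rw [Complex.mem_slitPlane_iff_not_le_zero]
  intro hle
  obtain ⟨r, hr⟩ : ∃ r : ℝ, (r : ℂ) = (z - b) / (z - a) :=
    ⟨_, Complex.ext (Complex.ofReal_re _) (by simpa using (Complex.le_def.1 hle).2.symm)⟩
  rw [← hr] at hle
  replace hle : r ≤ 0 := mod_cast hle
  have hz_eq : z = ((b - r * a) / (1 - r) : ℝ) := by
    have hr1 : (1 - r : ℂ) ≠ 0 := mod_cast (by linarith : (1 - r : ℝ) ≠ 0)
    rw [eq_div_iff hza] at hr
    push_cast
    rw [eq_div_iff hr1]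
    linear_combination -hr
  refine hz ⟨_, ⟨?_, ?_⟩, hz_eq.symm⟩
  · rw [le_div_iff₀ (by linarith)]
    nlinarith
  · rw [div_le_iff₀ (by linarith)]
    nlinarith

theorem continuous_exteriorKernel_comp {X : Type*} [TopologicalSpace X] {a b : X → ℝ} {z : X → ℂ}
    {e : X → Circle} (ha : Continuous a) (hb : Continuous b) (hz : Continuous z)
    (he : Continuous e) (hab : ∀ x, a x < b x)
    (hz_mem : ∀ x, z x ∉ Complex.ofReal '' Icc (a x) (b x)) :
    Continuous fun x => exteriorKernel (a x) (b x) (z x) (e x) := by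
  have hza : ∀ x, z x - a x ≠ 0 := fun x h =>
    hz_mem x ⟨a x, left_mem_Icc.2 (hab x).le, (sub_eq_zero.1 h).symm⟩
  have hlog : Continuous fun x => Complex.log ((z x - b x) / (z x - a x)) :=
    Continuous.clog (by fun_prop (disch := exact hza)) fun x =>
      sub_div_sub_mem_slitPlane (hab x) (hz_mem x)
  unfold exteriorKernel wBranch intervalPoint
  refine Continuous.div (by fun_prop) (by fun_prop) fun x h => ?_
  exact hz_mem x ⟨_, intervalPoint_mem_Icc (hab x).le (e x), (sub_eq_zero.1 h).symm⟩

theorem wBranch_joukowski {a b : ℝ} (hab : a < b) {ρ : ℂ} (h₀ : ρ ≠ 0) (h₁ : ‖ρ‖ < 1) :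
    wBranch a b (joukowski a b ρ) = (b - a) / 4 * (1 - ρ ^ 2) / ρ := by
  have hba : (b : ℂ) - a ≠ 0 := sub_ne_zero.2 (Complex.ofReal_injective.ne hab.ne')
  have hre : 0 < ((1 - ρ) / (1 + ρ)).re := by
    have h := le_re_herglotzRieszKernel (c := 0) (z := 1) (w := -ρ) (R := 1) (by simp) (by simpa)
    simp only [sub_zero, sub_neg_eq_add, ← sub_eq_add_neg, norm_neg] at h
    exact (div_pos (by linarith) (by positivity)).trans_le h
  have hne : 1 + ρ ≠ 0 := fun h => by simp [h] at hre
  have hquot : (joukowski a b ρ - b) / (joukowski a b ρ - a) = ((1 - ρ) / (1 + ρ)) ^ 2 := by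
    rw [joukowski_sub_left h₀, joukowski_sub_right h₀]; field_simp
  have hroot : Complex.exp (1 / 2 * Complex.log (((1 - ρ) / (1 + ρ)) ^ 2)) =
      (1 - ρ) / (1 + ρ) := by
    rw [mul_comm, one_div, ← Complex.cpow_def_of_ne_zero, Complex.sq_cpow_two_inv hre]
    exact pow_ne_zero 2 fun h => by simp [h] at hre
  rw [wBranch, hquot, hroot, joukowski_sub_left h₀]
  field_simp
  ring

section HerglotzKernel

variable {ρ : ℂ}

theorem continuous_re_herglotzRieszKernel_circle (hρ : ‖ρ‖ < 1) :
    Continuous fun e : Circle => (herglotzRieszKernel 0 ρ e).re :=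
  Complex.continuous_re.comp <| (continuousOn_herglotzRieszKernel_sphere (R := 1)
    (mem_ball_zero_iff.2 hρ)).comp_continuous (by fun_prop) fun e => by
      simpa using e.norm_coe

theorem integral_re_herglotzRieszKernel_circle (hρ : ‖ρ‖ < 1) :
    ∫ e : Circle, (herglotzRieszKernel 0 ρ e).re = 1 := by
  have h := InnerProductSpace.HarmonicOnNhd.circleAverage_re_herglotzRieszKernel_smul
    (f := fun _ => (1 : ℝ)) (c := 0) (R := 1) (w := ρ)
    (fun x _ => InnerProductSpace.harmonicAt_const _) (mem_ball_zero_iff.2 hρ)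
  rw [← h, ← integral_circle_eq_circleAverage]
  simp

theorem integral_re_herglotzRieszKernel_mul_log_norm_circle_sub (hρ : ‖ρ‖ < 1) (s : Circle) :
    ∫ e : Circle, (herglotzRieszKernel 0 ρ e).re * Real.log ‖(e : ℂ) - s‖ =
      Real.log ‖ρ - s‖ := by
  have h := circleAverage_re_herglotzRieszKernel_mul_log₀ (w := ρ) (ρ := s) (R := 1)
    (mem_sphere_zero_iff_norm.2 s.norm_coe) (mem_ball_zero_iff.2 hρ)
  rw [← h, ← integral_circle_eq_circleAverage]
  simp

theorem integrable_re_herglotzRieszKernel_mul {f : Circle → ℝ} (hρ : ‖ρ‖ < 1)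
    (hf : Integrable f) : Integrable fun e : Circle => (herglotzRieszKernel 0 ρ e).re * f e := by
  have hc := continuous_re_herglotzRieszKernel_circle hρ
  obtain ⟨C, hC⟩ := isCompact_univ.exists_bound_of_continuousOn hc.continuousOn
  exact hf.bdd_mul hc.aestronglyMeasurable (.of_forall fun e => hC e (mem_univ e))

end HerglotzKernel

theorem exteriorKernel_joukowski {a b : ℝ} (hab : a < b) {ρ : ℂ} (h₀ : ρ ≠ 0) (h₁ : ‖ρ‖ < 1)
    (e : Circle) : exteriorKernel a b (joukowski a b ρ) e =
      (herglotzRieszKernel 0 ρ e + herglotzRieszKernel 0 ρ (e⁻¹ : Circle)) / 2 := by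
  have hba : (b : ℂ) - a ≠ 0 := sub_ne_zero.2 (Complex.ofReal_injective.ne hab.ne')
  have hsub : ∀ s : Circle, (s : ℂ) - ρ ≠ 0 := fun s hs => by
    rw [← sub_eq_zero.1 hs, s.norm_coe] at h₁
    exact lt_irrefl _ h₁
  have hmul : (e : ℂ) * (e⁻¹ : Circle) = 1 := by
    rw [← Circle.coe_mul, mul_inv_cancel, Circle.coe_one]
  have he := hsub e
  have he' := hsub e⁻¹
  rw [exteriorKernel, wBranch_joukowski hab h₀ h₁, joukowski_sub_intervalPoint a b h₀,
    herglotzRieszKernel_def, herglotzRieszKernel_def]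
  simp only [sub_zero]
  field_simp
  linear_combination -2 * hmul

theorem greenInterval_div_four_le_re_exteriorKernel {a b : ℝ} (hab : a < b) {z : ℂ}
    (hz : z ∉ Complex.ofReal '' Icc a b) (hg : greenInterval a b z ≤ 1) (e : Circle) :
    greenInterval a b z / 4 ≤ (exteriorKernel a b z e).re := by
  obtain ⟨ρ, h₀, h₁, rfl⟩ := exists_joukowski_eq_of_notMem hab hz
  have hpoisson : ∀ s : Circle, (1 - ‖ρ‖) / 2 ≤ (herglotzRieszKernel 0 ρ s).re := fun s => by
    have h := le_re_herglotzRieszKernel (c := 0) (z := s) (w := ρ) (R := 1)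
      (mem_sphere_zero_iff_norm.2 s.norm_coe) (mem_ball_zero_iff.2 h₁)
    rw [herglotzRieszKernel_def]
    simp only [sub_zero] at h ⊢
    refine le_trans ?_ h
    gcongr
    linarith
  have hgreen : greenInterval a b (joukowski a b ρ) / 2 ≤ 1 - ‖ρ‖ := by
    rw [greenInterval_joukowski hab h₀ h₁.le] at hg ⊢
    have hexp := Real.add_one_le_exp (-Real.log ‖ρ‖)
    rw [Real.exp_neg, Real.exp_log (norm_pos_iff.2 h₀),
      ← mul_le_mul_iff_right₀ (norm_pos_iff.2 h₀), mul_inv_cancel₀ (norm_ne_zero_iff.2 h₀)] at hexp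
    nlinarith [Real.log_nonpos (norm_nonneg ρ) h₁.le]
  rw [exteriorKernel_joukowski hab h₀ h₁]
  have := hpoisson e
  have := hpoisson e⁻¹
  simp only [Complex.div_ofNat_re, Complex.add_re]
  linarith

theorem integral_re_exteriorKernel_joukowski_mul {a b : ℝ} (hab : a < b) {ρ : ℂ} (h₀ : ρ ≠ 0)
    (h₁ : ‖ρ‖ < 1) {f : Circle → ℝ} (hf : Integrable f) (hinv : ∀ e, f e⁻¹ = f e) :
    ∫ e, (exteriorKernel a b (joukowski a b ρ) e).re * f e =
      ∫ e : Circle, (herglotzRieszKernel 0 ρ e).re * f e := by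
  set F : Circle → ℝ := fun e => (herglotzRieszKernel 0 ρ e).re * f e
  have hF : Integrable F := integrable_re_herglotzRieszKernel_mul h₁ hf
  have hsymm : ∀ e, (exteriorKernel a b (joukowski a b ρ) e).re * f e = (F e + F e⁻¹) / 2 := by
    intro e
    simp only [F, hinv, exteriorKernel_joukowski hab h₀ h₁, Complex.div_ofNat_re, Complex.add_re]
    ring
  simp only [hsymm]
  rw [integral_div, integral_add hF hF.comp_inv, integral_inv_eq_self F volume]
  ring

theorem integral_re_exteriorKernel {a b : ℝ} (hab : a < b) {z : ℂ}
    (hz : z ∉ Complex.ofReal '' Icc a b) : ∫ e, (exteriorKernel a b z e).re = 1 := by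
  obtain ⟨ρ, h₀, h₁, rfl⟩ := exists_joukowski_eq_of_notMem hab hz
  have h := integral_re_exteriorKernel_joukowski_mul hab h₀ h₁ (integrable_const (1 : ℝ))
    fun _ => rfl
  simpa only [mul_one, integral_re_herglotzRieszKernel_circle h₁] using h

theorem integral_re_exteriorKernel_mul_log {a b : ℝ} (hab : a < b) {z : ℂ}
    (hz : z ∉ Complex.ofReal '' Icc a b) (s : Circle) :
    ∫ e, (exteriorKernel a b z e).re * Real.log ‖(intervalPoint a b e : ℂ) - intervalPoint a b s‖ =
      Real.log ‖z - intervalPoint a b s‖ - greenInterval a b z := by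
  obtain ⟨ρ, h₀, h₁, rfl⟩ := exists_joukowski_eq_of_notMem hab hz
  have hne : ∀ e : Circle, (e : ℂ) ≠ ρ := fun e he => by
    rw [← he, e.norm_coe] at h₁
    exact lt_irrefl _ h₁
  set H : Circle → ℝ := fun e => (herglotzRieszKernel 0 ρ e).re
  set c := Real.log ((b - a) / 4)
  have hH : Integrable H :=
    ((continuous_re_herglotzRieszKernel_circle h₁).integrable_of_hasCompactSupport
      (HasCompactSupport.of_compactSpace _))
  have hlog : ∀ s : Circle, Integrable fun e : Circle => H e * Real.log ‖(e : ℂ) - s‖ := fun s =>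
    integrable_re_herglotzRieszKernel_mul h₁ (integrable_log_norm_circle_sub s)
  have hint : Integrable fun e =>
      Real.log ‖(intervalPoint a b e : ℂ) - intervalPoint a b s‖ := by
    simpa only [norm_sub_rev] using
      integrable_log_norm_sub_intervalPoint hab (intervalPoint a b s : ℂ)
  rw [integral_re_exteriorKernel_joukowski_mul hab h₀ h₁ hint
    (fun e => by rw [intervalPoint_inv])]
  have hfactor : (fun e => H e * Real.log ‖(intervalPoint a b e : ℂ) - intervalPoint a b s‖)
      =ᵐ[volume] fun e => H e * c +
        (H e * Real.log ‖(e : ℂ) - s‖ + H e * Real.log ‖(e : ℂ) - (s⁻¹ : Circle)‖) := by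
    filter_upwards [ae_circle_coe_ne s, ae_circle_coe_ne (s⁻¹ : Circle)] with e hs hs'
    rw [← joukowski_circle,
      log_norm_joukowski_sub_intervalPoint hab e.coe_ne_zero hs.symm hs'.symm, e.norm_coe,
      Real.log_one, norm_sub_rev (s : ℂ), norm_sub_rev ((s⁻¹ : Circle) : ℂ)]
    ring
  calc ∫ e, H e * Real.log ‖(intervalPoint a b e : ℂ) - intervalPoint a b s‖
      = (∫ e, H e * c) + ((∫ e, H e * Real.log ‖(e : ℂ) - s‖) +
          ∫ e, H e * Real.log ‖(e : ℂ) - (s⁻¹ : Circle)‖) := by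
        rw [integral_congr_ae hfactor]
        refine (integral_add (hH.mul_const c) ((hlog s).add (hlog s⁻¹))).trans ?_
        exact congrArg _ (integral_add (hlog s) (hlog s⁻¹))
    _ = c + (Real.log ‖ρ - s‖ + Real.log ‖ρ - (s⁻¹ : Circle)‖) := by
        rw [integral_mul_const, integral_re_herglotzRieszKernel_circle h₁, one_mul,
          integral_re_herglotzRieszKernel_mul_log_norm_circle_sub h₁ s,
          integral_re_herglotzRieszKernel_mul_log_norm_circle_sub h₁ s⁻¹]
    _ = _ := by
        rw [log_norm_joukowski_sub_intervalPoint hab h₀ (hne s) (hne s⁻¹),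
          greenInterval_joukowski hab h₀ h₁.le, norm_sub_rev ρ, norm_sub_rev ρ]
        ring

theorem tendsto_integral_abs_sub_of_le {α ι : Type*} [MeasurableSpace α] {ν : Measure α}
    {l : Filter ι} [l.IsCountablyGenerated] {F : ι → α → ℝ} {f G : α → ℝ} (hG : Integrable G ν)
    (hF : ∀ i, Integrable (F i) ν) (hf : Integrable f ν) (hFG : ∀ᶠ i in l, ∀ x, F i x ≤ G x)
    (hlim : ∀ᵐ x ∂ν, Tendsto (fun i => F i x) l (𝓝 (f x)))
    (hint : Tendsto (fun i => ∫ x, F i x ∂ν) l (𝓝 (∫ x, f x ∂ν))) :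
    Tendsto (fun i => ∫ x, |F i x - f x| ∂ν) l (𝓝 0) := by
  have hpos : Tendsto (fun i => ∫ x, max (F i x - f x) 0 ∂ν) l (𝓝 (∫ _, (0 : ℝ) ∂ν)) := by
    refine tendsto_integral_filter_of_dominated_convergence (fun x => |G x - f x|) ?_ ?_
      (hG.sub hf).abs ?_
    · exact .of_forall fun i => ((hF i).sub hf).pos_part.aestronglyMeasurable
    · filter_upwards [hFG] with i hi
      refine .of_forall fun x => ?_
      rw [Real.norm_eq_abs, abs_of_nonneg (le_max_right _ _)]
      exact max_le ((sub_le_sub_right (hi x) _).trans (le_abs_self _)) (abs_nonneg _)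
    · filter_upwards [hlim] with x hx
      simpa using (hx.sub_const (f x)).max (tendsto_const_nhds (x := (0 : ℝ)))
  have hsplit : ∀ i, ∫ x, |F i x - f x| ∂ν =
      2 * ∫ x, max (F i x - f x) 0 ∂ν - (∫ x, F i x ∂ν - ∫ x, f x ∂ν) := fun i => by
    rw [← integral_const_mul, ← integral_sub (hF i) hf]
    refine .trans ?_ (integral_sub (((hF i).sub hf).pos_part.const_mul 2) ((hF i).sub hf))
    refine integral_congr_ae (.of_forall fun x => ?_)
    beta_reduce
    rcases le_total 0 (F i x - f x) with h | h
    · rw [abs_of_nonneg h, max_eq_left h]; ring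
    · rw [abs_of_nonpos h, max_eq_right h]; ring
  simpa [hsplit] using (hpos.const_mul 2).sub (hint.sub_const (∫ x, f x ∂ν))

section LogKernel

variable {a b : ℝ}

theorem norm_intervalPoint_le (hab : a ≤ b) (e : Circle) :
    ‖(intervalPoint a b e : ℂ)‖ ≤ max |a| |b| := by
  rw [Complex.norm_real]
  exact abs_le_max_abs_abs (intervalPoint_mem_Icc hab e).1 (intervalPoint_mem_Icc hab e).2

theorem ae_intervalPoint_ne (hab : a < b) (z : ℂ) : ∀ᵐ e, (intervalPoint a b e : ℂ) ≠ z := by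
  have hac : arcsineMeasure a b ≪ volume :=
    (withDensity_absolutelyContinuous _ _).trans Measure.restrict_le_self.absolutelyContinuous
  filter_upwards [(measurePreserving_intervalPoint hab).quasiMeasurePreserving.ae
    (hac.ae_le (Measure.ae_ne volume z.re))] with e he h
  exact he (congrArg Complex.re h)

theorem tendsto_integral_abs_log_norm_sub_intervalPoint (hab : a < b) (z₀ : ℂ) :
    Tendsto (fun z : ℂ => ∫ e, |Real.log ‖z - intervalPoint a b e‖ -
      Real.log ‖z₀ - intervalPoint a b e‖|) (𝓝 z₀) (𝓝 0) := by
  refine tendsto_integral_abs_sub_of_le (integrable_const (‖z₀‖ + 1 + max |a| |b|))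
    (integrable_log_norm_sub_intervalPoint hab) (integrable_log_norm_sub_intervalPoint hab z₀)
    ?_ ?_ ?_
  · filter_upwards [(continuous_norm.tendsto z₀).eventually_lt_const (lt_add_one _)] with z hz e
    have hle := norm_sub_le z (intervalPoint a b e)
    have hx := norm_intervalPoint_le hab.le e
    exact (Real.log_le_self (norm_nonneg _)).trans (by linarith)
  · filter_upwards [ae_intervalPoint_ne hab z₀] with e he
    have h : ContinuousAt (fun z : ℂ => ‖z - intervalPoint a b e‖) z₀ := by fun_prop
    exact (h.log (norm_ne_zero_iff.2 (sub_ne_zero.2 he.symm))).tendsto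
  · simp only [integral_log_norm_sub_intervalPoint hab]
    exact ((continuous_greenInterval hab).tendsto z₀).const_add _

theorem continuous_integral_abs_log_norm_sub_intervalPoint (hab : a < b) :
    Continuous fun z : ℂ => ∫ e, |Real.log ‖z - intervalPoint a b e‖| := by
  refine continuous_iff_continuousAt.2 fun z₀ => tendsto_iff_norm_sub_tendsto_zero.2 <|
    squeeze_zero (fun _ => norm_nonneg _) (fun z => ?_)
      (tendsto_integral_abs_log_norm_sub_intervalPoint hab z₀)
  have hint := integrable_log_norm_sub_intervalPoint hab
  rw [← integral_sub (hint z).abs (hint z₀).abs]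
  exact (norm_integral_le_integral_norm _).trans <|
    integral_mono ((hint z).abs.sub (hint z₀).abs).norm ((hint z).sub (hint z₀)).abs
      fun e => abs_abs_sub_abs_le _ _

theorem integrable_log_norm_comp_sub_intervalPoint {Y : Type*} [TopologicalSpace Y] [CompactSpace Y]
    [MeasurableSpace Y] [OpensMeasurableSpace Y] {ν : Measure Y} [IsFiniteMeasure ν] {ζ : Y → ℂ}
    (hab : a < b) (hζ : Continuous ζ) :
    Integrable (fun p : Y × Circle => Real.log ‖ζ p.1 - intervalPoint a b p.2‖)
      (ν.prod volume) := by
  have hmeas : Measurable fun p : Y × Circle => Real.log ‖ζ p.1 - intervalPoint a b p.2‖ := by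
    have := hζ.measurable
    fun_prop
  refine (integrable_prod_iff hmeas.aestronglyMeasurable).2
    ⟨.of_forall fun y => integrable_log_norm_sub_intervalPoint hab (ζ y), ?_⟩
  have hc := (continuous_integral_abs_log_norm_sub_intervalPoint hab).comp hζ
  exact hc.integrable_of_hasCompactSupport (.of_compactSpace _)

end LogKernel

/-- The logarithmic potential `∫ log |z - x| N dω(x)` of the charge with density `N` against the
arcsine law of `[a, b]`, pulled back to the unit circle. -/
def logPotential (a b : ℝ) (N : Circle → ℝ) (z : ℂ) : ℝ :=
  ∫ e, Real.log ‖z - intervalPoint a b e‖ * N e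

section LogPotential

variable {a b : ℝ} {N : Circle → ℝ}

theorem integrable_log_norm_sub_intervalPoint_mul (hab : a < b) (hN : MemLp N ⊤) (z : ℂ) :
    Integrable fun e => Real.log ‖z - intervalPoint a b e‖ * N e :=
  (memLp_one_iff_integrable.2 (integrable_log_norm_sub_intervalPoint hab z)).integrable_mul hN

theorem logPotential_sub {M : Circle → ℝ} (hab : a < b) (hN : MemLp N ⊤) (hM : MemLp M ⊤) (z : ℂ) :
    logPotential a b (N - M) z = logPotential a b N z - logPotential a b M z := by
  rw [logPotential, logPotential, logPotential,
    ← integral_sub (integrable_log_norm_sub_intervalPoint_mul hab hN z)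
      (integrable_log_norm_sub_intervalPoint_mul hab hM z)]
  simp only [Pi.sub_apply, mul_sub]

theorem logPotential_const (hab : a < b) (c : ℝ) (z : ℂ) : logPotential a b (fun _ => c) z =
    (Real.log ((b - a) / 4) + greenInterval a b z) * c := by
  rw [logPotential, integral_mul_const, integral_log_norm_sub_intervalPoint hab]

theorem continuous_logPotential (hab : a < b) (hN : MemLp N ⊤) :
    Continuous (logPotential a b N) := by
  obtain ⟨C, hC⟩ : ∃ C, ∀ᵐ e, ‖N e‖ ≤ C := ⟨_, ae_le_lpNorm_exponent_top hN⟩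
  refine continuous_iff_continuousAt.2 fun z₀ => tendsto_iff_norm_sub_tendsto_zero.2 ?_
  have hlim := (tendsto_integral_abs_log_norm_sub_intervalPoint hab z₀).mul_const C
  rw [zero_mul] at hlim
  refine squeeze_zero (fun _ => norm_nonneg _) (fun z => ?_) hlim
  have hint := integrable_log_norm_sub_intervalPoint hab
  rw [logPotential, logPotential,
    ← integral_sub (integrable_log_norm_sub_intervalPoint_mul hab hN z)
      (integrable_log_norm_sub_intervalPoint_mul hab hN z₀), ← integral_mul_const]
  refine norm_integral_le_of_norm_le (((hint z).sub (hint z₀)).abs.mul_const C) ?_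
  filter_upwards [hC] with e he
  rw [← sub_mul, norm_mul]
  exact mul_le_mul_of_nonneg_left he (norm_nonneg _)

theorem integral_mul_logPotential_comp {Y : Type*} [TopologicalSpace Y] [CompactSpace Y]
    [MeasurableSpace Y] [OpensMeasurableSpace Y] {ν : Measure Y} [IsFiniteMeasure ν] {ζ : Y → ℂ}
    {f : Y → ℝ} (hab : a < b) (hζ : Continuous ζ) (hf : MemLp f ⊤ ν) (hN : MemLp N ⊤) :
    ∫ y, f y * logPotential a b N (ζ y) ∂ν =
      ∫ e, (∫ y, f y * Real.log ‖ζ y - intervalPoint a b e‖ ∂ν) * N e := by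
  have hfN : MemLp (fun p : Y × Circle => f p.1 * N p.2) ⊤ (ν.prod volume) :=
    MemLp.mul (p := ⊤) (q := ⊤) (hN.comp_snd ν) (hf.comp_fst volume)
  have hint := (memLp_one_iff_integrable.2
    (integrable_log_norm_comp_sub_intervalPoint (ν := ν) hab hζ)).integrable_mul hfN
  calc ∫ y, f y * logPotential a b N (ζ y) ∂ν
      = ∫ y, (∫ e, Real.log ‖ζ y - intervalPoint a b e‖ * (f y * N e)) ∂ν := by
        simp only [logPotential, ← integral_const_mul, mul_left_comm (f _)]
    _ = ∫ e, (∫ y, Real.log ‖ζ y - intervalPoint a b e‖ * (f y * N e) ∂ν) :=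
        integral_integral_swap hint
    _ = _ := by
        simp only [← integral_mul_const]
        congr! 4
        ring

theorem continuous_exteriorKernel (hab : a < b) {z : ℂ} (hz : z ∉ Complex.ofReal '' Icc a b) :
    Continuous (exteriorKernel a b z) :=
  continuous_exteriorKernel_comp continuous_const continuous_const continuous_const continuous_id
    (fun _ => hab) fun _ => hz

theorem memLp_top_of_continuous {X E : Type*} [TopologicalSpace X] [CompactSpace X]
    [MeasurableSpace X] [OpensMeasurableSpace X] {ν : Measure X} [NormedAddCommGroup E]
    [SecondCountableTopologyEither X E] {f : X → E} (hf : Continuous f) : MemLp f ⊤ ν :=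
  hf.memLp_top_of_hasCompactSupport (.of_compactSpace f) ν

theorem logPotential_eq_greenInterval_mul_add (hab : a < b) (hN : MemLp N ⊤) {z : ℂ}
    (hz : z ∉ Complex.ofReal '' Icc a b) :
    logPotential a b N z = greenInterval a b z * (∫ e, N e) +
      ∫ e, (exteriorKernel a b z e).re * logPotential a b N (intervalPoint a b e) := by
  have hK : Continuous fun e => (exteriorKernel a b z e).re :=
    Complex.continuous_re.comp (continuous_exteriorKernel hab hz)
  rw [integral_mul_logPotential_comp hab (by fun_prop) (memLp_top_of_continuous hK) hN,
    ← integral_const_mul]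
  simp only [integral_re_exteriorKernel_mul_log hab hz, sub_mul]
  rw [integral_sub (integrable_log_norm_sub_intervalPoint_mul hab hN z)
    ((hN.integrable le_top).const_mul _), logPotential, add_sub_cancel]

theorem integral_log_norm_add_mul_circle_sub (c w : ℂ) {r : ℝ} (hr : r ≠ 0) :
    ∫ e : Circle, Real.log ‖c + r * e - w‖ = Real.log r + Real.posLog (r⁻¹ * ‖c - w‖) := by
  rw [← circleAverage_log_norm_sub_const_eq_log_radius_add_posLog hr,
    Real.circleAverage_eq_circleAverage_zero_one, ← integral_circle_eq_circleAverage]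
  simp only [add_comm c]

theorem posLog_div_norm_mul_ae_eq (hab : a < b) (c : ℂ) {r : ℝ} (hr : r ≠ 0) :
    (fun e => Real.posLog (r / ‖c - intervalPoint a b e‖) * N e) =ᵐ[volume] fun e =>
      (Real.log r + Real.posLog (r⁻¹ * ‖c - intervalPoint a b e‖)) * N e -
        Real.log ‖c - intervalPoint a b e‖ * N e := by
  filter_upwards [ae_intervalPoint_ne hab c] with e he
  have hne := norm_ne_zero_iff.2 (sub_ne_zero.2 he.symm)
  have h := Real.posLog_sub_posLog_inv (x := r⁻¹ * ‖c - intervalPoint a b e‖)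
  rw [mul_inv, inv_inv, ← div_eq_mul_inv, Real.log_mul (inv_ne_zero hr) hne, Real.log_inv] at h
  rw [← sub_mul]
  congr 1
  linarith

theorem integrable_log_add_posLog_mul (hN : MemLp N ⊤) (c : ℂ) (r : ℝ) : Integrable fun e =>
    (Real.log r + Real.posLog (r⁻¹ * ‖c - intervalPoint a b e‖)) * N e :=
  Integrable.mul_of_top_left (Continuous.integrable_of_hasCompactSupport (by fun_prop)
    (.of_compactSpace _)) hN

theorem integrable_posLog_div_norm_mul (hab : a < b) (hN : MemLp N ⊤) (c : ℂ) {r : ℝ}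
    (hr : r ≠ 0) : Integrable fun e => Real.posLog (r / ‖c - intervalPoint a b e‖) * N e :=
  (integrable_congr (posLog_div_norm_mul_ae_eq hab c hr)).2 <|
    (integrable_log_add_posLog_mul hN c r).sub (integrable_log_norm_sub_intervalPoint_mul hab hN c)

theorem integral_logPotential_circle (hab : a < b) (hN : MemLp N ⊤) (c : ℂ) {r : ℝ} (hr : r ≠ 0) :
    ∫ e : Circle, logPotential a b N (c + r * e) =
      logPotential a b N c + ∫ e, Real.posLog (r / ‖c - intervalPoint a b e‖) * N e := by
  have hswap := integral_mul_logPotential_comp (ν := volume) (ζ := fun e : Circle => c + r * e)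
    hab (by fun_prop) (memLp_top_const (1 : ℝ)) hN
  simp only [one_mul, integral_log_norm_add_mul_circle_sub _ _ hr] at hswap
  rw [hswap, integral_congr_ae (posLog_div_norm_mul_ae_eq hab c hr),
    integral_sub (integrable_log_add_posLog_mul hN c r)
      (integrable_log_norm_sub_intervalPoint_mul hab hN c), logPotential, add_sub_cancel]

theorem posLog_div_norm_mul_nonpos {c : ℂ} {r : ℝ} (hr : 0 < r)
    (hneg : ∀ e, ‖c - intervalPoint a b e‖ < r → N e ≤ 0) (e : Circle) :
    Real.posLog (r / ‖c - intervalPoint a b e‖) * N e ≤ 0 := by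
  rcases lt_or_ge ‖c - intervalPoint a b e‖ r with h | h
  · exact mul_nonpos_of_nonneg_of_nonpos Real.posLog_nonneg (hneg e h)
  · rw [(Real.posLog_eq_zero_iff _).2, zero_mul]
    rw [abs_of_nonneg (by positivity)]
    exact div_le_one_of_le₀ h (norm_nonneg _)

theorem integral_logPotential_circle_le (hab : a < b) (hN : MemLp N ⊤) {c : ℂ} {r : ℝ} (hr : 0 < r)
    (hneg : ∀ e, ‖c - intervalPoint a b e‖ < r → N e ≤ 0) :
    ∫ e : Circle, logPotential a b N (c + r * e) ≤ logPotential a b N c := by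
  rw [integral_logPotential_circle hab hN c hr.ne', add_le_iff_nonpos_right]
  exact integral_nonpos (posLog_div_norm_mul_nonpos hr hneg)

theorem integral_logPotential_circle_lt (hab : a < b) (hN : MemLp N ⊤) (s : Circle) {r : ℝ}
    (hr : 0 < r) (hneg : ∀ e, ‖(intervalPoint a b s : ℂ) - intervalPoint a b e‖ < r → N e < 0) :
    ∫ e : Circle, logPotential a b N (intervalPoint a b s + r * e) <
      logPotential a b N (intervalPoint a b s) := by
  rw [integral_logPotential_circle hab hN _ hr.ne', add_lt_iff_neg_left, ← neg_pos, ← integral_neg]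
  set U : Set Circle := {e | ‖(intervalPoint a b s : ℂ) - intervalPoint a b e‖ < r}
  have hU : 0 < volume U := by
    refine IsOpen.measure_pos volume (isOpen_lt (by fun_prop) continuous_const) ⟨s, ?_⟩
    simpa [U] using hr
  have hsub : U ≤ᵐ[volume] Function.support fun e =>
      -(Real.posLog (r / ‖(intervalPoint a b s : ℂ) - intervalPoint a b e‖) * N e) := by
    filter_upwards [ae_intervalPoint_ne hab (intervalPoint a b s)] with e hne he
    have hpos := norm_pos_iff.2 (sub_ne_zero.2 hne.symm)
    refine neg_ne_zero.2 (mul_ne_zero (fun h => ?_) (hneg e he).ne)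
    rw [Real.posLog_eq_zero_iff, abs_of_pos (div_pos hr hpos), div_le_one hpos] at h
    exact h.not_gt he
  exact (integral_pos_iff_support_of_nonneg
    (fun e => neg_nonneg.2 (posLog_div_norm_mul_nonpos hr (fun e he => (hneg e he).le) e))
    (integrable_posLog_div_norm_mul hab hN _ hr.ne').neg).2 (hU.trans_le (measure_mono_ae hsub))

theorem abs_log_norm_one_sub_le_log_two {w : ℂ} (hw : ‖w‖ ≤ 1 / 2) :
    |Real.log ‖1 - w‖| ≤ Real.log 2 := by
  have hlo : 2⁻¹ ≤ ‖1 - w‖ := by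
    have h := norm_sub_norm_le 1 w
    rw [norm_one] at h
    linarith
  have hhi : ‖1 - w‖ ≤ 2 := by
    have h := norm_sub_le 1 w
    rw [norm_one] at h
    linarith
  rw [abs_le, ← Real.log_inv]
  exact ⟨Real.log_le_log (by norm_num) hlo, Real.log_le_log (by linarith) hhi⟩

theorem eventually_cocompact_norm_intervalPoint_div_le (hab : a < b) :
    ∀ᶠ z : ℂ in cocompact ℂ, z ≠ 0 ∧ ∀ e, ‖intervalPoint a b e / z‖ ≤ 1 / 2 := by
  filter_upwards [(tendsto_norm_cocompact_atTop (E := ℂ)).eventually_gt_atTop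
    (2 * max |a| |b|)] with z hz
  have hz0 : 0 < ‖z‖ := by linarith [abs_nonneg a, le_max_left |a| |b|]
  refine ⟨norm_pos_iff.1 hz0, fun e => ?_⟩
  rw [norm_div, div_le_div_iff₀ hz0 two_pos]
  linarith [norm_intervalPoint_le hab.le e]

theorem tendsto_logPotential_sub_log_norm (hab : a < b) (hN : MemLp N ⊤) :
    Tendsto (fun z => logPotential a b N z - Real.log ‖z‖ * ∫ e, N e) (cocompact ℂ) (𝓝 0) := by
  have hcount : (cocompact ℂ).IsCountablyGenerated := by
    rw [← Metric.cobounded_eq_cocompact, ← comap_norm_atTop]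
    infer_instance
  have hlarge := eventually_cocompact_norm_intervalPoint_div_le hab
  have hlim : Tendsto (fun z : ℂ => ∫ e, Real.log ‖1 - intervalPoint a b e / z‖ * N e)
      (cocompact ℂ) (𝓝 (∫ _ : Circle, 0)) := by
    refine tendsto_integral_filter_of_dominated_convergence (fun e => Real.log 2 * ‖N e‖)
      (.of_forall fun z => ?_) ?_ ((hN.integrable le_top).norm.const_mul _)
      (.of_forall fun e => ?_)
    · have hmeas : Measurable fun e => Real.log ‖1 - intervalPoint a b e / z‖ := by fun_prop
      exact hmeas.aestronglyMeasurable.mul hN.aestronglyMeasurable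
    · filter_upwards [hlarge] with z hz
      refine .of_forall fun e => ?_
      rw [norm_mul]
      gcongr
      exact abs_log_norm_one_sub_le_log_two (hz.2 e)
    · have hdiv := (tendsto_inv₀_cobounded (α := ℂ)).const_mul (intervalPoint a b e : ℂ)
      rw [Metric.cobounded_eq_cocompact, mul_zero] at hdiv
      have hsub := (hdiv.const_sub 1).norm
      rw [sub_zero, norm_one] at hsub
      simpa only [Real.log_one, zero_mul, div_eq_mul_inv] using
        (hsub.log one_ne_zero).mul_const (N e)
  rw [integral_zero] at hlim
  refine hlim.congr' ?_
  filter_upwards [hlarge] with z hz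
  rw [logPotential, ← integral_const_mul, ← integral_sub
    (integrable_log_norm_sub_intervalPoint_mul hab hN z) ((hN.integrable le_top).const_mul _)]
  congr! 2 with e
  have hne : z - intervalPoint a b e ≠ 0 := fun h => by
    have hle := hz.2 e
    rw [← sub_eq_zero.1 h, div_self hz.1, norm_one] at hle
    norm_num at hle
  rw [one_sub_div hz.1, norm_div, Real.log_div (norm_ne_zero_iff.2 hne)
    (norm_ne_zero_iff.2 hz.1), sub_mul]

end LogPotential

/-- `ψ` solves the homogeneous dual Szegő system of the intervals `[a i, b i]` with weights `θ`:
`ψ i = -1/2 ∑_{j ≠ i} B i (θ j ψ j)`, where `B i` sweeps a charge onto `[a i, b i]`. -/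
structure IsDualSolution {ι : Type*} [Fintype ι] [DecidableEq ι] (a b : ι → ℝ)
    (θ ψ : ι → Circle → ℝ) : Prop where
  lt : ∀ i, a i < b i
  disjoint : Pairwise fun i j => Disjoint (Icc (a i) (b i)) (Icc (a j) (b j))
  measurable : ∀ i, Measurable (θ i)
  mem_Icc : ∀ i e, θ i e ∈ Icc (0 : ℝ) 1
  continuous : ∀ i, Continuous (ψ i)
  eq : ∀ i s, ψ i s = -(1 / 2) * ∑ j ∈ Finset.univ.erase i,
    ∫ t, (exteriorKernel (a i) (b i) (intervalPoint (a j) (b j) t) s).re * (θ j t * ψ j t)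

theorem ofReal_intervalPoint_notMem {a b c d : ℝ} (hcd : c ≤ d)
    (h : Disjoint (Icc a b) (Icc c d)) (e : Circle) :
    (intervalPoint c d e : ℂ) ∉ Complex.ofReal '' Icc a b := by
  rintro ⟨x, hx, hxe⟩
  exact h.ne_of_mem hx (intervalPoint_mem_Icc hcd e) (Complex.ofReal_injective hxe)

theorem continuous_exteriorKernel_intervalPoint {a b c d : ℝ} (hab : a < b) (hcd : c ≤ d)
    (h : Disjoint (Icc a b) (Icc c d)) :
    Continuous fun p : Circle × Circle => exteriorKernel a b (intervalPoint c d p.1) p.2 :=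
  continuous_exteriorKernel_comp continuous_const continuous_const (by fun_prop) (by fun_prop)
    (fun _ => hab) fun p => ofReal_intervalPoint_notMem hcd h p.1

namespace IsDualSolution

variable {ι : Type*} [Fintype ι] [DecidableEq ι] {a b : ι → ℝ} {θ ψ : ι → Circle → ℝ}

theorem neg (h : IsDualSolution a b θ ψ) : IsDualSolution a b θ (-ψ) where
  __ := h
  continuous i := (h.continuous i).neg
  eq i s := by
    simp only [Pi.neg_apply, h.eq i s, mul_neg, integral_neg, Finset.sum_neg_distrib]

theorem memLp_charge (h : IsDualSolution a b θ ψ) (i : ι) : MemLp (θ i * ψ i) ⊤ := by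
  have hθ : MemLp (θ i) ⊤ := memLp_top_of_bound (h.measurable i).aestronglyMeasurable 1
    (.of_forall fun e => by
      rw [Real.norm_eq_abs, abs_of_nonneg (h.mem_Icc i e).1]
      exact (h.mem_Icc i e).2)
  exact MemLp.mul (p := ⊤) (q := ⊤) (memLp_top_of_continuous (h.continuous i)) hθ

variable (a b θ ψ) in
/-- The potential `-∑ j, ∫ log |z - x| θ j ψ j dω j` of a solution of the dual Szegő system. -/
def potential (z : ℂ) : ℝ := -∑ j, logPotential (a j) (b j) (θ j * ψ j) z

variable (θ ψ) in
/-- The total charge of a solution of the dual Szegő system. -/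
def totalCharge : ℝ := ∑ j, ∫ e, θ j e * ψ j e

variable (θ ψ) in
/-- The density on the `i`-th interval of the total charge swept onto it. -/
def sweptDensity (i : ι) : Circle → ℝ := θ i * ψ i - fun e => 2 * ψ i e

variable (a b θ ψ) in
/-- The potential of `sweptDensity`, normalized to coincide with `potential` on the `i`-th
interval. -/
def sweptPotential (i : ι) (z : ℂ) : ℝ :=
  -(∑ j ∈ Finset.univ.erase i, ∫ t,
    greenInterval (a i) (b i) (intervalPoint (a j) (b j) t) * (θ j t * ψ j t)) -
      logPotential (a i) (b i) (sweptDensity θ ψ i) z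

theorem memLp_sweptDensity (h : IsDualSolution a b θ ψ) (i : ι) : MemLp (sweptDensity θ ψ i) ⊤ :=
  (h.memLp_charge i).sub (memLp_top_of_continuous ((h.continuous i).const_mul 2))

theorem continuous_potential (h : IsDualSolution a b θ ψ) : Continuous (potential a b θ ψ) :=
  (continuous_finsetSum _ fun j _ => continuous_logPotential (h.lt j) (h.memLp_charge j)).neg

theorem sweptDensity_eq (h : IsDualSolution a b θ ψ) (i : ι) (s : Circle) :
    sweptDensity θ ψ i s = θ i s * ψ i s + ∑ j ∈ Finset.univ.erase i,
      ∫ t, (exteriorKernel (a i) (b i) (intervalPoint (a j) (b j) t) s).re * (θ j t * ψ j t) := by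
  rw [sweptDensity, Pi.sub_apply, Pi.mul_apply, h.eq i s]
  ring

theorem integrable_mul_exteriorKernel_mul (h : IsDualSolution a b θ ψ) {i j : ι} (hij : i ≠ j)
    {f : Circle → ℝ} (hf : Integrable f) :
    Integrable fun p : Circle × Circle => f p.1 *
      ((exteriorKernel (a i) (b i) (intervalPoint (a j) (b j) p.2) p.1).re *
        (θ j p.2 * ψ j p.2)) := by
  have hK := Complex.continuous_re.comp ((continuous_exteriorKernel_intervalPoint (h.lt i)
    (h.lt j).le (h.disjoint hij)).comp continuous_swap)
  refine ((hf.mul_prod ((h.memLp_charge j).integrable le_top)).mul_of_top_left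
    (memLp_top_of_continuous hK)).congr (.of_forall fun p => ?_)
  simp only [Function.comp_apply, Prod.fst_swap, Prod.snd_swap, Pi.mul_apply]
  ring

theorem integral_mul_sweptDensity (h : IsDualSolution a b θ ψ) (i : ι) {f : Circle → ℝ}
    (hf : Integrable f) :
    ∫ s, f s * sweptDensity θ ψ i s = (∫ s, f s * (θ i s * ψ i s)) +
      ∑ j ∈ Finset.univ.erase i, ∫ t, (∫ s, (exteriorKernel (a i) (b i)
        (intervalPoint (a j) (b j) t) s).re * f s) * (θ j t * ψ j t) := by
  have hint := fun j (hj : j ∈ Finset.univ.erase i) =>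
    h.integrable_mul_exteriorKernel_mul (Finset.ne_of_mem_erase hj).symm hf
  have hcharge : Integrable fun s => f s * (θ i s * ψ i s) := hf.mul_of_top_left (h.memLp_charge i)
  have hswept : ∀ j ∈ Finset.univ.erase i, Integrable fun s => ∫ t, f s * ((exteriorKernel (a i)
      (b i) (intervalPoint (a j) (b j) t) s).re * (θ j t * ψ j t)) :=
    fun j hj => (hint j hj).integral_prod_left
  simp only [h.sweptDensity_eq, mul_add, Finset.mul_sum, ← integral_const_mul]
  rw [integral_add hcharge (integrable_finsetSum _ hswept), integral_finsetSum _ hswept]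
  congr 1
  refine Finset.sum_congr rfl fun j hj => ?_
  rw [integral_integral_swap (hint j hj)]
  simp only [← integral_mul_const]
  congr! 4
  ring

theorem integral_sweptDensity (h : IsDualSolution a b θ ψ) (i : ι) :
    ∫ s, sweptDensity θ ψ i s = totalCharge θ ψ := by
  have hint := h.integral_mul_sweptDensity i (f := fun _ => 1) (integrable_const _)
  simp only [one_mul, mul_one] at hint
  rw [hint, totalCharge, ← Finset.add_sum_erase _ _ (Finset.mem_univ i)]
  congr 1
  refine Finset.sum_congr rfl fun j hj => integral_congr_ae (.of_forall fun t => ?_)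
  beta_reduce
  rw [integral_re_exteriorKernel (h.lt i) (ofReal_intervalPoint_notMem (h.lt j).le
    (h.disjoint (Finset.ne_of_mem_erase hj).symm) t), one_mul]

theorem sweptPotential_intervalPoint (h : IsDualSolution a b θ ψ) (i : ι) (s : Circle) :
    sweptPotential a b θ ψ i (intervalPoint (a i) (b i) s) =
      potential a b θ ψ (intervalPoint (a i) (b i) s) := by
  set x : ℂ := ((intervalPoint (a i) (b i) s : ℝ) : ℂ)
  have hpot : ∀ j ∈ Finset.univ.erase i,
      ∫ t, (∫ e, (exteriorKernel (a i) (b i) (intervalPoint (a j) (b j) t) e).re *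
        Real.log ‖x - intervalPoint (a i) (b i) e‖) * (θ j t * ψ j t) =
      logPotential (a j) (b j) (θ j * ψ j) x - ∫ t,
        greenInterval (a i) (b i) (intervalPoint (a j) (b j) t) * (θ j t * ψ j t) := by
    intro j hj
    have hgreen := (continuous_greenInterval (h.lt i)).comp
      (Complex.continuous_ofReal.comp (continuous_intervalPoint (a j) (b j)))
    have hgreen_int : Integrable fun t =>
        greenInterval (a i) (b i) (intervalPoint (a j) (b j) t) * (θ j t * ψ j t) :=
      (hgreen.integrable_of_hasCompactSupport (.of_compactSpace _)).mul_of_top_left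
        (h.memLp_charge j)
    rw [logPotential, ← integral_sub
      (integrable_log_norm_sub_intervalPoint_mul (h.lt j) (h.memLp_charge j) x) hgreen_int]
    refine integral_congr_ae (.of_forall fun t => ?_)
    have hz := ofReal_intervalPoint_notMem (h.lt j).le
      (h.disjoint (Finset.ne_of_mem_erase hj).symm) t
    simp only [norm_sub_rev x, Pi.mul_apply]
    rw [integral_re_exteriorKernel_mul_log (h.lt i) hz s, sub_mul]
  rw [sweptPotential, logPotential, h.integral_mul_sweptDensity i
    (integrable_log_norm_sub_intervalPoint (h.lt i) x), Finset.sum_congr rfl hpot,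
    Finset.sum_sub_distrib, potential, ← Finset.add_sum_erase _ _ (Finset.mem_univ i)]
  simp only [logPotential, Pi.mul_apply]
  ring

theorem sweptPotential_eq (h : IsDualSolution a b θ ψ) (i : ι) {z : ℂ}
    (hz : z ∉ Complex.ofReal '' Icc (a i) (b i)) :
    sweptPotential a b θ ψ i z = (∫ e, (exteriorKernel (a i) (b i) z e).re *
      potential a b θ ψ (intervalPoint (a i) (b i) e)) -
        greenInterval (a i) (b i) z * totalCharge θ ψ := by
  have hK : Continuous fun e => (exteriorKernel (a i) (b i) z e).re :=
    Complex.continuous_re.comp (continuous_exteriorKernel (h.lt i) hz)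
  have hpot : Continuous fun e => logPotential (a i) (b i) (sweptDensity θ ψ i)
      (intervalPoint (a i) (b i) e) :=
    (continuous_logPotential (h.lt i) (h.memLp_sweptDensity i)).comp (by fun_prop)
  have hKpot : Integrable fun e => (exteriorKernel (a i) (b i) z e).re *
      logPotential (a i) (b i) (sweptDensity θ ψ i) (intervalPoint (a i) (b i) e) :=
    (hK.mul hpot).integrable_of_hasCompactSupport (.of_compactSpace _)
  simp only [← h.sweptPotential_intervalPoint i]
  simp only [sweptPotential, mul_sub]
  rw [integral_sub ((hK.integrable_of_hasCompactSupport (.of_compactSpace _)).mul_const _) hKpot,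
    integral_mul_const,
    integral_re_exteriorKernel (h.lt i) hz,
    logPotential_eq_greenInterval_mul_add (h.lt i) (h.memLp_sweptDensity i) hz,
    h.integral_sweptDensity]
  ring

end IsDualSolution

theorem eq_of_forall_le_of_le_integral {X : Type*} [TopologicalSpace X] [CompactSpace X]
    [MeasurableSpace X] [BorelSpace X] {ν : Measure X} [IsProbabilityMeasure ν]
    [ν.IsOpenPosMeasure] {f : X → ℝ} {m : ℝ} (hf : Continuous f) (hle : ∀ x, f x ≤ m)
    (hm : m ≤ ∫ x, f x ∂ν) (x : X) : f x = m := by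
  have hfi : Integrable f ν := hf.integrable_of_hasCompactSupport (.of_compactSpace f)
  by_contra hne
  have hpos := (continuous_const.sub hf).integral_pos_of_hasCompactSupport_nonneg_nonzero (μ := ν)
    (f := fun x => m - f x) (.of_compactSpace _) (fun y => sub_nonneg.2 (hle y))
    (sub_ne_zero.2 (Ne.symm hne))
  rw [integral_sub (integrable_const m) hfi, integral_const, probReal_univ, one_smul] at hpos
  linarith

namespace IsDualSolution

variable {ι : Type*} [Fintype ι] [DecidableEq ι] {a b : ι → ℝ} {θ ψ : ι → Circle → ℝ}

theorem eq_of_intervalPoint_eq (h : IsDualSolution a b θ ψ) {i : ι} {s t : Circle}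
    (hst : intervalPoint (a i) (b i) s = intervalPoint (a i) (b i) t) : ψ i s = ψ i t := by
  rw [h.eq i s, h.eq i t]
  simp only [exteriorKernel, hst]

theorem continuous_potential_intervalPoint (h : IsDualSolution a b θ ψ) (i : ι) :
    Continuous fun s => potential a b θ ψ (intervalPoint (a i) (b i) s) :=
  h.continuous_potential.comp (by fun_prop)

theorem sweptPotential_le_of_isMax (h : IsDualSolution a b θ ψ) (hcharge : 0 ≤ totalCharge θ ψ)
    {i : ι} {m : ℝ} (hmax : ∀ s, potential a b θ ψ (intervalPoint (a i) (b i) s) ≤ m) {z : ℂ}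
    (hz : greenInterval (a i) (b i) z ≤ 1) : sweptPotential a b θ ψ i z ≤ m -
      greenInterval (a i) (b i) z *
        ((∫ s, (m - potential a b θ ψ (intervalPoint (a i) (b i) s))) / 4) := by
  by_cases hzi : z ∈ Complex.ofReal '' Icc (a i) (b i)
  · obtain ⟨x, hx, rfl⟩ := hzi
    obtain ⟨s, rfl⟩ := exists_intervalPoint_eq (h.lt i) hx
    rw [h.sweptPotential_intervalPoint, greenInterval_intervalPoint (h.lt i), zero_mul, sub_zero]
    exact hmax s
  · have hV := h.continuous_potential_intervalPoint i
    have hK : Continuous fun e => (exteriorKernel (a i) (b i) z e).re :=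
      Complex.continuous_re.comp (continuous_exteriorKernel (h.lt i) hzi)
    have hKm : Integrable fun e => (exteriorKernel (a i) (b i) z e).re * m :=
      (hK.mul_const m).integrable_of_hasCompactSupport (.of_compactSpace _)
    have hKV : Integrable fun e => (exteriorKernel (a i) (b i) z e).re *
        potential a b θ ψ (intervalPoint (a i) (b i) e) :=
      (hK.mul hV).integrable_of_hasCompactSupport (.of_compactSpace _)
    have hgap : greenInterval (a i) (b i) z / 4 *
        ∫ s, (m - potential a b θ ψ (intervalPoint (a i) (b i) s)) ≤
        m - ∫ e, (exteriorKernel (a i) (b i) z e).re *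
          potential a b θ ψ (intervalPoint (a i) (b i) e) := by
      have hm : ∫ e, (exteriorKernel (a i) (b i) z e).re * m = m := by
        rw [integral_mul_const, integral_re_exteriorKernel (h.lt i) hzi, one_mul]
      nth_rewrite 2 [← hm]
      rw [← integral_sub hKm hKV, ← integral_const_mul]
      refine integral_mono (((continuous_const.sub hV).const_mul _).integrable_of_hasCompactSupport
        (.of_compactSpace _)) (hKm.sub hKV) fun e => ?_
      rw [← mul_sub]
      exact mul_le_mul_of_nonneg_right
        (greenInterval_div_four_le_re_exteriorKernel (h.lt i) hzi hz e) (sub_nonneg.2 (hmax e))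
    rw [h.sweptPotential_eq i hzi]
    linarith [mul_nonneg (greenInterval_nonneg (h.lt i) z) hcharge]

theorem not_eventually_sweptDensity_lt (h : IsDualSolution a b θ ψ)
    (hcharge : 0 ≤ totalCharge θ ψ) {i : ι} {s₀ : Circle}
    (hmax : ∀ s, potential a b θ ψ (intervalPoint (a i) (b i) s) ≤
      potential a b θ ψ (intervalPoint (a i) (b i) s₀)) :
    ¬ ∀ᶠ y : ℂ in 𝓝 (intervalPoint (a i) (b i) s₀ : ℂ), ∀ e, (intervalPoint (a i) (b i) e : ℂ) = y →
      sweptDensity θ ψ i e < (∫ s, (potential a b θ ψ (intervalPoint (a i) (b i) s₀) -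
        potential a b θ ψ (intervalPoint (a i) (b i) s))) / 4 := by
  intro hlt
  set x₀ : ℂ := ((intervalPoint (a i) (b i) s₀ : ℝ) : ℂ)
  set δ := ∫ s, (potential a b θ ψ x₀ - potential a b θ ψ (intervalPoint (a i) (b i) s))
  have hN := h.memLp_sweptDensity i
  have hδ : MemLp (fun _ : Circle => δ / 4) ⊤ := memLp_const _
  have hgreen : ∀ᶠ z in 𝓝 x₀, greenInterval (a i) (b i) z ≤ 1 :=
    (continuous_greenInterval (h.lt i)).continuousAt.eventually_le_const
      (by simp [x₀, greenInterval_intervalPoint (h.lt i)])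
  obtain ⟨r, hr, hball⟩ := Metric.eventually_nhds_iff.1 (hlt.and hgreen)
  have hlog_le : ∀ z, greenInterval (a i) (b i) z ≤ 1 →
      logPotential (a i) (b i) (sweptDensity θ ψ i - fun _ => δ / 4) x₀ ≤
        logPotential (a i) (b i) (sweptDensity θ ψ i - fun _ => δ / 4) z := by
    intro z hz
    have hx₀ := h.sweptPotential_intervalPoint i s₀
    have hz_le := h.sweptPotential_le_of_isMax hcharge hmax hz
    rw [logPotential_sub (h.lt i) hN hδ, logPotential_sub (h.lt i) hN hδ,
      logPotential_const (h.lt i), logPotential_const (h.lt i),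
      greenInterval_intervalPoint (h.lt i)]
    simp only [sweptPotential] at hx₀ hz_le
    linarith
  have hmean := integral_logPotential_circle_lt (h.lt i) (hN.sub hδ) s₀ (half_pos hr) fun e he =>
    sub_neg.2 ((hball (by rw [dist_eq_norm']; linarith)).1 e rfl)
  refine hmean.not_ge ?_
  have hcont : Continuous fun e : Circle => logPotential (a i) (b i)
      (sweptDensity θ ψ i - fun _ => δ / 4) (x₀ + (r / 2 : ℝ) * e) :=
    (continuous_logPotential (h.lt i) (hN.sub hδ)).comp (by fun_prop)
  calc logPotential (a i) (b i) (sweptDensity θ ψ i - fun _ => δ / 4) x₀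
      = ∫ e : Circle, logPotential (a i) (b i) (sweptDensity θ ψ i - fun _ => δ / 4) x₀ := by simp
    _ ≤ _ := integral_mono (integrable_const _)
      (hcont.integrable_of_hasCompactSupport (.of_compactSpace _)) fun e =>
        hlog_le _ (hball (by simp [abs_of_pos hr, Circle.norm_coe, hr])).2

theorem integral_potential_sub_div_four_le (h : IsDualSolution a b θ ψ)
    (hcharge : 0 ≤ totalCharge θ ψ) {i : ι} {s₀ : Circle}
    (hmax : ∀ s, potential a b θ ψ (intervalPoint (a i) (b i) s) ≤
      potential a b θ ψ (intervalPoint (a i) (b i) s₀)) :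
    (∫ s, (potential a b θ ψ (intervalPoint (a i) (b i) s₀) -
        potential a b θ ψ (intervalPoint (a i) (b i) s))) / 4 ≤
      max (-ψ i s₀) (-(2 * ψ i s₀)) := by
  by_contra! hlt
  refine h.not_eventually_sweptDensity_lt hcharge hmax ?_
  have hclosed : IsClosedMap fun e : Circle => (intervalPoint (a i) (b i) e : ℂ) :=
    Continuous.isClosedMap (by fun_prop)
  refine hclosed.eventually_nhds_fiber _ fun e he => ?_
  have he_eq := h.eq_of_intervalPoint_eq (Complex.ofReal_injective he)
  have hψ : Continuous fun e => max (-ψ i e) (-(2 * ψ i e)) := by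
    have := h.continuous i
    fun_prop
  filter_upwards [hψ.continuousAt.eventually_lt_const (by simpa only [he_eq] using hlt)] with t ht
  refine lt_of_le_of_lt ?_ ht
  obtain ⟨hθ₀, hθ₁⟩ := h.mem_Icc i t
  rw [sweptDensity, Pi.sub_apply, Pi.mul_apply, le_max_iff]
  rcases le_total 0 (ψ i t) with hψt | hψt
  · exact .inl (by nlinarith)
  · exact .inr (by nlinarith)

theorem nonpos_of_isMax (h : IsDualSolution a b θ ψ) (hcharge : 0 ≤ totalCharge θ ψ) {i : ι}
    {s₀ : Circle} (hmax : ∀ s, potential a b θ ψ (intervalPoint (a i) (b i) s) ≤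
      potential a b θ ψ (intervalPoint (a i) (b i) s₀)) : ψ i s₀ ≤ 0 := by
  have hle := h.integral_potential_sub_div_four_le hcharge hmax
  have hint := integral_nonneg (μ := volume) fun s => sub_nonneg.2 (hmax s)
  rcases le_max_iff.1 hle with hle | hle <;> linarith

theorem potential_intervalPoint_eq_of_isMax (h : IsDualSolution a b θ ψ)
    (hcharge : 0 ≤ totalCharge θ ψ) {i : ι} {s₀ : Circle}
    (hmax : ∀ s, potential a b θ ψ (intervalPoint (a i) (b i) s) ≤
      potential a b θ ψ (intervalPoint (a i) (b i) s₀)) (hψ : ψ i s₀ = 0) (s : Circle) :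
    potential a b θ ψ (intervalPoint (a i) (b i) s) =
      potential a b θ ψ (intervalPoint (a i) (b i) s₀) := by
  have hV := h.continuous_potential_intervalPoint i
  refine eq_of_forall_le_of_le_integral (ν := volume) hV hmax ?_ s
  have hle := h.integral_potential_sub_div_four_le hcharge hmax
  rw [integral_sub (integrable_const _) (hV.integrable_of_hasCompactSupport (.of_compactSpace _)),
    hψ] at hle
  simp only [integral_const, probReal_univ, one_smul, mul_zero, neg_zero, max_self] at hle
  linarith

theorem eventually_nonpos_of_isMax (h : IsDualSolution a b θ ψ) (hcharge : 0 ≤ totalCharge θ ψ)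
    {c : ℂ} (hc : ∀ z, potential a b θ ψ z ≤ potential a b θ ψ c) (i : ι) :
    ∀ᶠ z in 𝓝 c, ∀ e, (intervalPoint (a i) (b i) e : ℂ) = z → ψ i e ≤ 0 := by
  have hclosed : IsClosedMap fun e : Circle => (intervalPoint (a i) (b i) e : ℂ) :=
    Continuous.isClosedMap (by fun_prop)
  refine hclosed.eventually_nhds_fiber c fun s₀ hs₀ => ?_
  obtain rfl : (intervalPoint (a i) (b i) s₀ : ℂ) = c := hs₀
  rcases (h.nonpos_of_isMax hcharge fun s => hc _).lt_or_eq with hneg | hzero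
  · filter_upwards [(h.continuous i).continuousAt.eventually_lt_const hneg] with e he using he.le
  · have hconst := h.potential_intervalPoint_eq_of_isMax hcharge (fun s => hc _) hzero
    exact .of_forall fun e => h.nonpos_of_isMax hcharge fun s => (hc _).trans_eq (hconst e).symm

theorem potential_le_integral_circle (h : IsDualSolution a b θ ψ) {c : ℂ} {r : ℝ} (hr : 0 < r)
    (hneg : ∀ i e, ‖c - intervalPoint (a i) (b i) e‖ < r → ψ i e ≤ 0) :
    potential a b θ ψ c ≤ ∫ e : Circle, potential a b θ ψ (c + r * e) := by
  have hpot : ∀ i, Integrable fun e : Circle => logPotential (a i) (b i) (θ i * ψ i) (c + r * e) :=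
    fun i => ((continuous_logPotential (h.lt i) (h.memLp_charge i)).comp
      (by fun_prop)).integrable_of_hasCompactSupport (.of_compactSpace _)
  simp only [potential]
  rw [integral_neg, integral_finsetSum _ fun i _ => hpot i, neg_le_neg_iff]
  exact Finset.sum_le_sum fun i _ => integral_logPotential_circle_le (h.lt i) (h.memLp_charge i) hr
    fun e he => mul_nonpos_of_nonneg_of_nonpos (h.mem_Icc i e).1 (hneg i e he)

theorem potential_eq_of_isMax (h : IsDualSolution a b θ ψ) (hcharge : 0 ≤ totalCharge θ ψ)
    {c : ℂ} (hc : ∀ z, potential a b θ ψ z ≤ potential a b θ ψ c) (z : ℂ) :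
    potential a b θ ψ z = potential a b θ ψ c := by
  have hV := h.continuous_potential
  suffices IsClopen {z | potential a b θ ψ z = potential a b θ ψ c} from
    (this.eq_univ ⟨c, rfl⟩).ge (mem_univ z)
  refine ⟨isClosed_eq hV continuous_const, isOpen_iff_mem_nhds.2 fun w hw => ?_⟩
  have hw : potential a b θ ψ w = potential a b θ ψ c := hw
  rw [← hw] at hc ⊢
  obtain ⟨ρ, hρ, hball⟩ := Metric.eventually_nhds_iff.1
    (eventually_all.2 (h.eventually_nonpos_of_isMax hcharge hc))
  refine Metric.mem_nhds_iff.2 ⟨ρ, hρ, fun y hy => ?_⟩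
  rcases eq_or_ne y w with rfl | hyw
  · exact rfl
  have hmean := h.potential_le_integral_circle (norm_pos_iff.2 (sub_ne_zero.2 hyw)) fun i e he =>
    hball ((dist_eq_norm' _ w).trans_lt (he.trans (mem_ball_iff_norm.1 hy))) i e rfl
  have hcircle := eq_of_forall_le_of_le_integral (ν := volume)
    (f := fun e : Circle => potential a b θ ψ (w + ‖y - w‖ * e)) (hV.comp (by fun_prop))
    (fun e => hc _) hmean (Circle.exp (Complex.arg (y - w)))
  rwa [Circle.coe_exp, Complex.norm_mul_exp_arg_mul_I, add_sub_cancel] at hcircle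

theorem tendsto_potential_add_log_norm (h : IsDualSolution a b θ ψ) :
    Tendsto (fun z => potential a b θ ψ z + Real.log ‖z‖ * totalCharge θ ψ) (cocompact ℂ)
      (𝓝 0) := by
  have hsum := tendsto_finsetSum Finset.univ fun j _ =>
    tendsto_logPotential_sub_log_norm (h.lt j) (h.memLp_charge j)
  rw [Finset.sum_const_zero] at hsum
  refine neg_zero (G := ℝ) ▸ hsum.neg.congr fun z => ?_
  simp only [potential, totalCharge, Finset.sum_sub_distrib, Finset.mul_sum, Pi.mul_apply]
  ring

theorem not_eventually_potential_lt (h : IsDualSolution a b θ ψ) (hcharge : 0 ≤ totalCharge θ ψ)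
    (z₁ : ℂ) : ¬ ∀ᶠ z in cocompact ℂ, potential a b θ ψ z < potential a b θ ψ z₁ := by
  intro hlt
  obtain ⟨c, hc⟩ := h.continuous_potential.exists_forall_ge' z₁ (hlt.mono fun z => le_of_lt)
  obtain ⟨z, hz⟩ := hlt.exists
  rw [h.potential_eq_of_isMax hcharge hc z, h.potential_eq_of_isMax hcharge hc z₁] at hz
  exact hz.false

theorem totalCharge_nonpos (h : IsDualSolution a b θ ψ) : totalCharge θ ψ ≤ 0 := by
  by_contra! hpos
  have hlog : Tendsto (fun z : ℂ => Real.log ‖z‖ * totalCharge θ ψ) (cocompact ℂ) atTop :=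
    (Real.tendsto_log_atTop.comp tendsto_norm_cocompact_atTop).atTop_mul_const hpos
  have hbot := h.tendsto_potential_add_log_norm.add_atBot (tendsto_neg_atTop_atBot.comp hlog)
  simp only [Function.comp_apply, add_neg_cancel_right] at hbot
  exact h.not_eventually_potential_lt hpos.le 0 (hbot.eventually_lt_atBot _)

theorem totalCharge_eq_zero (h : IsDualSolution a b θ ψ) : totalCharge θ ψ = 0 := by
  refine h.totalCharge_nonpos.antisymm ?_
  have hneg := h.neg.totalCharge_nonpos
  simp only [totalCharge, Pi.neg_apply, mul_neg, integral_neg, Finset.sum_neg_distrib] at hneg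
  exact neg_nonpos.1 hneg

theorem potential_nonpos (h : IsDualSolution a b θ ψ) (z : ℂ) : potential a b θ ψ z ≤ 0 := by
  by_contra! hpos
  have hlim := h.tendsto_potential_add_log_norm
  simp only [h.totalCharge_eq_zero, mul_zero, add_zero] at hlim
  exact h.not_eventually_potential_lt h.totalCharge_eq_zero.ge z (hlim.eventually_lt_const hpos)

theorem potential_eq_zero (h : IsDualSolution a b θ ψ) (z : ℂ) : potential a b θ ψ z = 0 := by
  refine (h.potential_nonpos z).antisymm ?_
  have hneg := h.neg.potential_nonpos z
  simp only [potential, logPotential, Pi.neg_apply, Pi.mul_apply, mul_neg, integral_neg,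
    Finset.sum_neg_distrib, neg_nonpos] at hneg
  simp only [potential, logPotential, Pi.mul_apply]
  linarith

theorem nonpos (h : IsDualSolution a b θ ψ) (i : ι) (s : Circle) : ψ i s ≤ 0 :=
  h.nonpos_of_isMax h.totalCharge_eq_zero.ge fun t => by
    rw [h.potential_eq_zero, h.potential_eq_zero]

theorem eq_zero (h : IsDualSolution a b θ ψ) (i : ι) (s : Circle) : ψ i s = 0 :=
  (h.nonpos i s).antisymm (neg_nonpos.1 (h.neg.nonpos i s))

end IsDualSolution

theorem continuous_of_abs_sub_le_norm_sub {X F : Type*} [TopologicalSpace X]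
    [SeminormedAddCommGroup F] {f : X → ℝ} {g : X → F} (hg : Continuous g)
    (h : ∀ x y, |f x - f y| ≤ ‖g x - g y‖) : Continuous f := by
  refine continuous_iff_continuousAt.2 fun y => tendsto_iff_norm_sub_tendsto_zero.2 ?_
  exact squeeze_zero (fun _ => norm_nonneg _) (fun x => h x y)
    (tendsto_iff_norm_sub_tendsto_zero.1 (hg.tendsto y))

theorem isCompact_setOf_abs_le_and_abs_sub_le {X F : Type*} [TopologicalSpace X]
    [SeminormedAddCommGroup F] {g : X → F} (hg : Continuous g) (C : ℝ) :
    IsCompact {f : C(X, ℝ) | (∀ x, |f x| ≤ C) ∧ ∀ x y, |f x - f y| ≤ ‖g x - g y‖} := by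
  set K := {f : C(X, ℝ) | (∀ x, |f x| ≤ C) ∧ ∀ x y, |f x - f y| ≤ ‖g x - g y‖}
  have himage : ContinuousMap.toFun '' K =
      {f : X → ℝ | (∀ x, |f x| ≤ C) ∧ ∀ x y, |f x - f y| ≤ ‖g x - g y‖} :=
    Subset.antisymm (image_subset_iff.2 fun _ => id) fun f hf =>
      ⟨⟨f, continuous_of_abs_sub_le_norm_sub hg hf.2⟩, hf, rfl⟩
  refine ArzelaAscoli.isCompact_of_equicontinuous K ?_ fun x => ?_
  · rw [himage]
    refine (isCompact_univ_pi fun _ : X => isCompact_Icc (a := -C) (b := C)).of_isClosed_subset ?_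
      fun f hf x _ => abs_le.1 (hf.1 x)
    simp only [Set.ofPred_and, Set.ofPred_forall]
    exact (isClosed_iInter fun x => isClosed_le (by fun_prop) (by fun_prop)).inter
      (isClosed_iInter fun x => isClosed_iInter fun y => isClosed_le (by fun_prop) (by fun_prop))
  · rw [Metric.equicontinuousAt_iff_right]
    intro ε hε
    have hlim := tendsto_iff_norm_sub_tendsto_zero.1 (hg.tendsto x)
    filter_upwards [hlim.eventually_lt_const hε] with y hy f
    exact (f.2.2 x y).trans_lt (norm_sub_rev (g x) (g y) ▸ hy)

section OperatorsIntoContinuousMaps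

variable {X E : Type*} [TopologicalSpace X] [CompactSpace X] [NormedAddCommGroup E]
  [NormedSpace ℝ E]

/-- The bounded operator `v ↦ (x ↦ G x v)` into the continuous functions attached to a
norm-continuous family `G` of functionals; it is linear and continuous in `G`. -/
def familyOperator : C(X, E →L[ℝ] ℝ) →L[ℝ] E →L[ℝ] C(X, ℝ) :=
  LinearMap.mkContinuous₂
    (LinearMap.mk₂ ℝ
      (fun (G : C(X, E →L[ℝ] ℝ)) v => (⟨fun x => G x v, by fun_prop⟩ : C(X, ℝ)))
      (fun _ _ _ => rfl) (fun _ _ _ => rfl)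
      (fun G v w => ContinuousMap.ext fun x => map_add (G x) v w)
      (fun c G v => ContinuousMap.ext fun x => map_smul (G x) c v)) 1
    fun G v => by
      rw [one_mul]
      refine (ContinuousMap.norm_le _ (by positivity)).2 fun x => ((G x).le_opNorm v).trans ?_
      gcongr
      exact G.norm_coe_le_norm x

theorem isCompactOperator_familyOperator (G : C(X, E →L[ℝ] ℝ)) :
    IsCompactOperator (familyOperator G) := by
  refine ⟨_, isCompact_setOf_abs_le_and_abs_sub_le G.continuous ‖G‖,
    mem_of_superset (Metric.closedBall_mem_nhds (0 : E) one_pos) fun v hv => ?_⟩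
  rw [mem_closedBall_zero_iff] at hv
  refine ⟨fun x => ?_, fun x y => ?_⟩
  · exact ((G x).le_opNorm_of_le hv).trans ((mul_one _).trans_le (G.norm_coe_le_norm x))
  · exact ((G x - G y).le_opNorm_of_le hv).trans_eq (mul_one _)

end OperatorsIntoContinuousMaps

theorem isUnit_one_sub_of_isCompactOperator {𝕜 E : Type*} [RCLike 𝕜] [NormedAddCommGroup E]
    [NormedSpace 𝕜 E] [CompleteSpace E] {T : E →L[𝕜] E} (hT : IsCompactOperator T)
    (hinj : ∀ v, T v = v → v = 0) : IsUnit (1 - T) := by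
  rcases hT.hasEigenvalue_or_mem_resolventSet (μ := (1 : 𝕜)) one_ne_zero with h | h
  · obtain ⟨v, hv⟩ := h.exists_hasEigenvector
    exact absurd (hinj v (hv.apply_eq_smul.trans (one_smul 𝕜 v))) hv.2
  · simpa using spectrum.mem_resolventSet_iff.1 h

theorem tendsto_of_comp_one_sub_eq {𝕜 E F α : Type*} [NontriviallyNormedField 𝕜]
    [NormedAddCommGroup E] [NormedSpace 𝕜 E] [CompleteSpace E] [NormedAddCommGroup F]
    [NormedSpace 𝕜 F] {l : Filter α} {T : α → E →L[𝕜] E} {T₀ : E →L[𝕜] E}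
    {φ f : α → E →L[𝕜] F} {φ₀ f₀ : E →L[𝕜] F} (hT : Tendsto T l (𝓝 T₀)) (hunit : IsUnit (1 - T₀))
    (hf : Tendsto f l (𝓝 f₀)) (hφ : ∀ n, φ n ∘L (1 - T n) = f n) (hφ₀ : φ₀ ∘L (1 - T₀) = f₀) :
    Tendsto φ l (𝓝 φ₀) := by
  have hsub : Tendsto (fun n => 1 - T n) l (𝓝 (1 - T₀)) := tendsto_const_nhds.sub hT
  have hsolve : ∀ {U : E →L[𝕜] E} {χ h : E →L[𝕜] F}, IsUnit U → χ ∘L U = h →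
      h ∘L Ring.inverse U = χ := by
    rintro U χ _ hU rfl
    rw [ContinuousLinearMap.comp_assoc, ← ContinuousLinearMap.mul_def,
      Ring.mul_inverse_cancel _ hU]
    rfl
  obtain ⟨U₀, hU₀⟩ := hunit
  have hinv : Tendsto (fun n => Ring.inverse (1 - T n)) l (𝓝 (Ring.inverse (1 - T₀))) := by
    rw [← hU₀] at hsub ⊢
    exact (NormedRing.inverse_continuousAt U₀).tendsto.comp hsub
  rw [← hsolve ⟨U₀, hU₀⟩ hφ₀]
  refine ((continuous_fst.clm_comp continuous_snd).tendsto (f₀, Ring.inverse (1 - T₀)) |>.comp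
    (hf.prodMk_nhds hinv)).congr' ?_
  filter_upwards [hsub.eventually (Units.isOpen.mem_nhds ⟨U₀, hU₀⟩)] with n hn
  exact hsolve hn (hφ n)

theorem tendsto_toL1 {X α : Type*} [MeasurableSpace X] {ν : Measure X} {l : Filter α}
    {w : α → X → ℝ} {w₀ : X → ℝ} (hw : ∀ n, Integrable (w n) ν) (hw₀ : Integrable w₀ ν)
    (h : Tendsto (fun n => ∫ x, |w n x - w₀ x| ∂ν) l (𝓝 0)) :
    Tendsto (fun n => (hw n).toL1 (w n)) l (𝓝 (hw₀.toL1 w₀)) := by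
  rw [tendsto_iff_norm_sub_tendsto_zero]
  refine h.congr fun n => ?_
  rw [← Integrable.toL1_sub _ _ (hw n) hw₀, L1.norm_of_fun_eq_integral_norm]
  rfl

section DensityFunctional

variable {X : Type*} [TopologicalSpace X] [CompactSpace X] [MeasurableSpace X] [BorelSpace X]
  [SecondCountableTopologyEither X ℝ] {ν : Measure X} [IsFiniteMeasure ν]

variable (ν) in
/-- The functional `f ↦ ∫ w f dν` on the continuous functions attached to an integrable density
`w`. -/
def densityFunctional : Lp ℝ 1 ν →L[ℝ] C(X, ℝ) →L[ℝ] ℝ :=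
  (((ContinuousLinearMap.mul ℝ ℝ).lpPairing ν 1 ⊤).flip ∘L ContinuousMap.toLp ⊤ ν ℝ).flip

theorem densityFunctional_toL1_apply {w : X → ℝ} (hw : Integrable w ν) (f : C(X, ℝ)) :
    densityFunctional ν (hw.toL1 w) f = ∫ x, w x * f x ∂ν := by
  change (ContinuousLinearMap.mul ℝ ℝ).lpPairing ν 1 ⊤ _ (ContinuousMap.toLp ⊤ ν ℝ f) = _
  rw [ContinuousLinearMap.lpPairing_eq_integral]
  refine integral_congr_ae ?_
  filter_upwards [hw.coeFn_toL1, ContinuousMap.coeFn_toLp (p := ⊤) (𝕜 := ℝ) ν f] with x h₁ h₂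
  simp only [ContinuousLinearMap.mul_apply', h₁, h₂]

variable (ν) in
/-- The operator `(K ψ)(s) = ∫ κ(s, t) θ(t) ψ(t) dν(t)` on the continuous functions. -/
def kernelOperator (θ : Lp ℝ 1 ν) (κ : C(X, C(X, ℝ))) : C(X, ℝ) →L[ℝ] C(X, ℝ) :=
  familyOperator ⟨fun s => densityFunctional ν θ ∘L .mul ℝ _ (κ s), by fun_prop⟩

theorem kernelOperator_toL1_apply {θ : X → ℝ} (hθ : Integrable θ ν) (κ : C(X, C(X, ℝ)))
    (ψ : C(X, ℝ)) (s : X) :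
    kernelOperator ν (hθ.toL1 θ) κ ψ s = ∫ t, θ t * (κ s t * ψ t) ∂ν := by
  exact densityFunctional_toL1_apply hθ (κ s * ψ)

variable (ν) in
theorem continuous_kernelOperator : Continuous fun p : Lp ℝ 1 ν × C(X, C(X, ℝ)) =>
    kernelOperator ν p.1 p.2 := by
  refine familyOperator.continuous.comp (ContinuousMap.continuous_of_continuous_uncurry _ ?_)
  have hκ : Continuous fun p : (Lp ℝ 1 ν × C(X, C(X, ℝ))) × X => p.1.2 p.2 := by fun_prop
  exact (by fun_prop : Continuous fun p : (Lp ℝ 1 ν × C(X, C(X, ℝ))) × X =>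
    densityFunctional ν p.1.1).clm_comp ((ContinuousLinearMap.mul ℝ C(X, ℝ)).continuous.comp hκ)

theorem tendsto_kernelOperator {α : Type*} {l : Filter α} {θ : α → Lp ℝ 1 ν} {θ₀ : Lp ℝ 1 ν}
    {κ : α → C(X, C(X, ℝ))} {κ₀ : C(X, C(X, ℝ))} (hθ : Tendsto θ l (𝓝 θ₀))
    (hκ : Tendsto κ l (𝓝 κ₀)) :
    Tendsto (fun n => kernelOperator ν (θ n) (κ n)) l (𝓝 (kernelOperator ν θ₀ κ₀)) := by
  simpa only [Function.comp_def] using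
    ((continuous_kernelOperator ν).tendsto (θ₀, κ₀)).comp (hθ.prodMk_nhds hκ)

theorem tendsto_densityFunctional {α : Type*} {l : Filter α} {w : α → Lp ℝ 1 ν} {w₀ : Lp ℝ 1 ν}
    (hw : Tendsto w l (𝓝 w₀)) :
    Tendsto (fun n => densityFunctional ν (w n)) l (𝓝 (densityFunctional ν w₀)) :=
  ((densityFunctional ν).continuous.tendsto w₀).comp hw

end DensityFunctional

theorem integrable_mul_kernel_mul {X : Type*} [TopologicalSpace X] [CompactSpace X]
    [MeasurableSpace X] [BorelSpace X] [SecondCountableTopology X] {ν : Measure X} [SFinite ν]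
    {u w : X → ℝ} (hu : Integrable u ν) (hw : Integrable w ν)
    (κ : C(X, C(X, ℝ))) : Integrable (fun p : X × X => u p.1 * (κ p.1 p.2 * w p.2)) (ν.prod ν) := by
  have hκ : Continuous fun p : X × X => κ p.1 p.2 := by fun_prop
  refine ((hu.mul_prod hw).bdd_mul hκ.aestronglyMeasurable
    (.of_forall fun p => ((κ p.1).norm_coe_le_norm p.2).trans (κ.norm_coe_le_norm p.1))).congr
    (.of_forall fun p => ?_)
  ring

/-- By Fubini, the equation `u = F + θ Kᵗu` for a density becomes a linear equation for the
functional with density `u`. -/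
theorem densityFunctional_comp_one_sub_kernelOperator {X : Type*} [TopologicalSpace X]
    [CompactSpace X] [MeasurableSpace X] [BorelSpace X] [SecondCountableTopology X] {ν : Measure X}
    [IsFiniteMeasure ν] {u F θ : X → ℝ} (hu : Integrable u ν)
    (hF : Integrable F ν) (hθ : Integrable θ ν) (κ : C(X, C(X, ℝ)))
    (h : ∀ᵐ t ∂ν, u t = F t + θ t * ∫ s, κ s t * u s ∂ν) :
    densityFunctional ν (hu.toL1 u) ∘L (1 - kernelOperator ν (hθ.toL1 θ) κ) =
      densityFunctional ν (hF.toL1 F) := by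
  ext ψ
  have hmul : ∀ {w : X → ℝ}, Integrable w ν → Integrable (fun t => w t * ψ t) ν := fun hw =>
    hw.mul_bdd ψ.continuous.aestronglyMeasurable (.of_forall ψ.norm_coe_le_norm)
  have hFubini : ∫ s, u s * kernelOperator ν (hθ.toL1 θ) κ ψ s ∂ν =
      ∫ t, (u t - F t) * ψ t ∂ν := by
    calc ∫ s, u s * kernelOperator ν (hθ.toL1 θ) κ ψ s ∂ν
        = ∫ s, ∫ t, u s * (κ s t * (θ t * ψ t)) ∂ν ∂ν := by
          simp_rw [kernelOperator_toL1_apply, ← integral_const_mul, mul_left_comm (θ _)]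
      _ = ∫ t, (θ t * ∫ s, κ s t * u s ∂ν) * ψ t ∂ν := by
          rw [integral_integral_swap (integrable_mul_kernel_mul hu (hmul hθ) κ)]
          refine integral_congr_ae (.of_forall fun t => ?_)
          simp only [← integral_const_mul, ← integral_mul_const]
          exact integral_congr_ae (.of_forall fun s => by ring)
      _ = ∫ t, (u t - F t) * ψ t ∂ν := by
          refine integral_congr_ae ?_
          filter_upwards [h] with t ht
          rw [ht, add_sub_cancel_left]
  change densityFunctional ν _ (ψ - kernelOperator ν _ κ ψ) = _
  rw [map_sub, densityFunctional_toL1_apply, densityFunctional_toL1_apply,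
    densityFunctional_toL1_apply, hFubini]
  simp_rw [sub_mul]
  rw [integral_sub (hmul hu) (hmul hF), sub_sub_cancel]

theorem tendsto_densityFunctional_of_ae_eq {X α : Type*} [TopologicalSpace X] [CompactSpace X]
    [MeasurableSpace X] [BorelSpace X] [SecondCountableTopology X] {ν : Measure X}
    [IsFiniteMeasure ν] {l : Filter α} {u F θ : α → X → ℝ} {u₀ F₀ θ₀ : X → ℝ}
    {κ : α → C(X, C(X, ℝ))} {κ₀ : C(X, C(X, ℝ))}
    (hu : ∀ n, Integrable (u n) ν) (hF : ∀ n, Integrable (F n) ν) (hθ : ∀ n, Integrable (θ n) ν)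
    (hu₀ : Integrable u₀ ν) (hF₀ : Integrable F₀ ν) (hθ₀ : Integrable θ₀ ν)
    (h : ∀ n, ∀ᵐ t ∂ν, u n t = F n t + θ n t * ∫ s, κ n s t * u n s ∂ν)
    (h₀ : ∀ᵐ t ∂ν, u₀ t = F₀ t + θ₀ t * ∫ s, κ₀ s t * u₀ s ∂ν)
    (hFlim : Tendsto (fun n => ∫ t, |F n t - F₀ t| ∂ν) l (𝓝 0))
    (hθlim : Tendsto (fun n => ∫ t, |θ n t - θ₀ t| ∂ν) l (𝓝 0))
    (hκ : Tendsto κ l (𝓝 κ₀))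
    (hinj : ∀ ψ : C(X, ℝ), (∀ s, ψ s = ∫ t, θ₀ t * (κ₀ s t * ψ t) ∂ν) → ψ = 0) :
    Tendsto (fun n => densityFunctional ν ((hu n).toL1 (u n))) l
      (𝓝 (densityFunctional ν (hu₀.toL1 u₀))) := by
  have hT : Tendsto (fun n => kernelOperator ν ((hθ n).toL1 (θ n)) (κ n)) l
      (𝓝 (kernelOperator ν (hθ₀.toL1 θ₀) κ₀)) := by
    exact tendsto_kernelOperator (tendsto_toL1 hθ hθ₀ hθlim) hκ
  have hunit : IsUnit (1 - kernelOperator ν (hθ₀.toL1 θ₀) κ₀) :=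
    isUnit_one_sub_of_isCompactOperator (isCompactOperator_familyOperator _) fun ψ hψ =>
      hinj ψ fun s => by rw [← kernelOperator_toL1_apply hθ₀, hψ]
  have hf : Tendsto (fun n => densityFunctional ν ((hF n).toL1 (F n))) l
      (𝓝 (densityFunctional ν (hF₀.toL1 F₀))) :=
    tendsto_densityFunctional (tendsto_toL1 hF hF₀ hFlim)
  exact tendsto_of_comp_one_sub_eq hT hunit hf
    (fun n => densityFunctional_comp_one_sub_kernelOperator (hu n) (hF n) (hθ n) (κ n) (h n))
    (densityFunctional_comp_one_sub_kernelOperator hu₀ hF₀ hθ₀ κ₀ h₀)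

section FamilyMeasure

variable {d : ℕ}

variable (d) in
/-- The sum of `d` copies of the normalized Haar measure of the circle, one for each index. -/
def familyMeasure : Measure (Fin d × Circle) := ∑ i, volume.map (Prod.mk i)

instance : IsFiniteMeasure (familyMeasure d) := by
  rw [familyMeasure]
  infer_instance

theorem ae_familyMeasure_iff {P : Fin d × Circle → Prop} :
    (∀ᵐ x ∂familyMeasure d, P x) ↔ ∀ i, ∀ᵐ e, P (i, e) := by
  simp only [familyMeasure, ae_finsetSum_measure_iff, Finset.mem_univ, forall_true_left,
    (measurableEmbedding_prodMk_left _).ae_map_iff]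

theorem integrable_familyMeasure_iff {f : Fin d × Circle → ℝ} :
    Integrable f (familyMeasure d) ↔ ∀ i, Integrable fun e => f (i, e) := by
  simp only [familyMeasure, integrable_finsetSum_measure, Finset.mem_univ, forall_true_left,
    (measurableEmbedding_prodMk_left _).integrable_map_iff]
  rfl

theorem integral_familyMeasure {f : Fin d × Circle → ℝ} (hf : Integrable f (familyMeasure d)) :
    ∫ x, f x ∂familyMeasure d = ∑ i, ∫ e, f (i, e) := by
  simp only [familyMeasure, integrable_finsetSum_measure] at hf ⊢
  rw [integral_finsetSum_measure hf]
  exact Finset.sum_congr rfl fun i _ => (measurableEmbedding_prodMk_left i).integral_map f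

theorem tendsto_integral_abs_sub_familyMeasure {α : Type*} {l : Filter α}
    {f : α → Fin d → Circle → ℝ} {f₀ : Fin d → Circle → ℝ}
    (hf : ∀ n i, Integrable (f n i)) (hf₀ : ∀ i, Integrable (f₀ i))
    (h : ∀ i, Tendsto (fun n => ∫ e, |f n i e - f₀ i e|) l (𝓝 0)) :
    Tendsto (fun n => ∫ x, |f n x.1 x.2 - f₀ x.1 x.2| ∂familyMeasure d) l (𝓝 0) := by
  have hint : ∀ n, Integrable (fun x : Fin d × Circle => |f n x.1 x.2 - f₀ x.1 x.2|)
      (familyMeasure d) := fun n =>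
    integrable_familyMeasure_iff.2 fun i => ((hf n i).sub (hf₀ i)).abs
  simp only [fun n => integral_familyMeasure (hint n)]
  simpa using tendsto_finsetSum Finset.univ fun i _ => h i

end FamilyMeasure

/-- A system of `d` nondegenerate pairwise disjoint closed intervals, encoded by the pair of its
left and right endpoints and topologized accordingly. -/
abbrev IntervalSystem (d : ℕ) : Type :=
  {p : (Fin d → ℝ) × (Fin d → ℝ) // (∀ i, p.1 i < p.2 i) ∧
    Pairwise fun i j => Disjoint (Icc (p.1 i) (p.2 i)) (Icc (p.1 j) (p.2 j))}

namespace IntervalSystem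

variable {d : ℕ}

/-- The left endpoints of a system of intervals. -/
def left (p : IntervalSystem d) : Fin d → ℝ := p.1.1

/-- The right endpoints of a system of intervals. -/
def right (p : IntervalSystem d) : Fin d → ℝ := p.1.2

theorem left_lt_right (p : IntervalSystem d) (i : Fin d) : p.left i < p.right i := p.2.1 i

theorem disjoint (p : IntervalSystem d) {i j : Fin d} (hij : i ≠ j) :
    Disjoint (Icc (p.left i) (p.right i)) (Icc (p.left j) (p.right j)) := p.2.2 hij

@[fun_prop]
theorem continuous_left (i : Fin d) : Continuous fun p : IntervalSystem d => p.left i := by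
  unfold left
  fun_prop

@[fun_prop]
theorem continuous_right (i : Fin d) : Continuous fun p : IntervalSystem d => p.right i := by
  unfold right
  fun_prop

/-- The kernel of the Szegő system: the contribution of the value at `x` of the logarithm of a
boundary modulus to its value at `y`. -/
def interaction (p : IntervalSystem d) (x y : Fin d × Circle) : ℝ :=
  if x.1 = y.1 then 0 else -(1 / 2) * (exteriorKernel (p.left x.1) (p.right x.1)
    (intervalPoint (p.left y.1) (p.right y.1) y.2) x.2).re

theorem continuous_interaction : Continuous
    fun q : (IntervalSystem d × (Fin d × Circle)) × (Fin d × Circle) =>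
      q.1.1.interaction q.1.2 q.2 := by
  have hpair : ∀ i j : Fin d, Continuous fun q : IntervalSystem d × Circle × Circle =>
      q.1.interaction (i, q.2.1) (j, q.2.2) := fun i j => by
    by_cases hij : i = j
    · simpa only [interaction, hij, if_true] using continuous_const
    · simp only [interaction, hij, if_false]
      refine continuous_const.mul (Complex.continuous_re.comp ?_)
      refine continuous_exteriorKernel_comp (by fun_prop) (by fun_prop) ?_ (by fun_prop)
        (fun q => q.1.left_lt_right i)
        fun q => ofReal_intervalPoint_notMem (q.1.left_lt_right j).le (q.1.disjoint hij) q.2.2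
      unfold intervalPoint
      fun_prop
  have hjoint := continuous_prod_of_discrete_left
    (f := fun q : (Fin d × Fin d) × (IntervalSystem d × Circle × Circle) =>
      q.2.1.interaction (q.1.1, q.2.2.1) (q.1.2, q.2.2.2)) |>.2 fun ij => hpair ij.1 ij.2
  exact hjoint.comp (f := fun q : (IntervalSystem d × (Fin d × Circle)) × (Fin d × Circle) =>
    ((q.1.2.1, q.2.1), (q.1.1, q.1.2.2, q.2.2))) (by fun_prop)

variable (d) in
/-- The interaction kernel as a continuous family of kernels on the circles. -/
def interactionMap : C(IntervalSystem d, C(Fin d × Circle, C(Fin d × Circle, ℝ))) :=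
  ContinuousMap.curry (ContinuousMap.curry ⟨_, continuous_interaction⟩)

@[simp]
theorem interactionMap_apply (p : IntervalSystem d) (x y : Fin d × Circle) :
    interactionMap d p x y = p.interaction x y := rfl

theorem integral_mul_interaction_mul (p : IntervalSystem d) {f g : Fin d × Circle → ℝ}
    {i : Fin d} {s : Circle}
    (h : Integrable (fun t => f t * (p.interaction (i, s) t * g t)) (familyMeasure d)) :
    ∫ t, f t * (p.interaction (i, s) t * g t) ∂familyMeasure d =
      -(1 / 2) * ∑ j ∈ Finset.univ.erase i, ∫ t, (exteriorKernel (p.left i) (p.right i)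
        (intervalPoint (p.left j) (p.right j) t) s).re * (f (j, t) * g (j, t)) := by
  rw [integral_familyMeasure h, ← Finset.add_sum_erase _ _ (Finset.mem_univ i), Finset.mul_sum]
  simp only [interaction, if_true, zero_mul, mul_zero, integral_zero, zero_add]
  refine Finset.sum_congr rfl fun j hj => ?_
  rw [← integral_const_mul]
  refine integral_congr_ae (.of_forall fun t => ?_)
  simp only [if_neg (Finset.ne_of_mem_erase hj).symm]
  ring

theorem eq_zero_of_eq_integral_interaction (p : IntervalSystem d) {θ : Fin d × Circle → ℝ}
    (hmeas : Measurable θ) (hmem : ∀ t, θ t ∈ Icc (0 : ℝ) 1) {ψ : C(Fin d × Circle, ℝ)}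
    (h : ∀ s, ψ s = ∫ t, θ t * (p.interaction s t * ψ t) ∂familyMeasure d) : ψ = 0 := by
  have hint : ∀ s, Integrable (fun t => θ t * (p.interaction s t * ψ t)) (familyMeasure d) :=
    fun s => by
      have hκψ : Continuous fun t => p.interaction s t * ψ t :=
        (interactionMap d p s * ψ).continuous
      exact (hκψ.integrable_of_hasCompactSupport (.of_compactSpace _)).bdd_mul
        hmeas.aestronglyMeasurable (c := 1) (.of_forall fun t => abs_le.2
          ⟨by linarith [(hmem t).1], (hmem t).2⟩)
  have hdual : IsDualSolution p.left p.right (fun i e => θ (i, e)) fun i e => ψ (i, e) :=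
    { lt := p.left_lt_right
      disjoint := fun _ _ => p.disjoint
      measurable := fun i => hmeas.comp measurable_prodMk_left
      mem_Icc := fun i e => hmem (i, e)
      continuous := fun i => by fun_prop
      eq := fun i s => (h (i, s)).trans (p.integral_mul_interaction_mul (hint (i, s))) }
  exact ContinuousMap.ext fun s => hdual.eq_zero s.1 s.2

end IntervalSystem

section ConvergenceOfCompositions

variable {Ω Y α : Type*} [MeasurableSpace Ω] {ν : Measure Ω} [IsFiniteMeasure ν]
  [MeasurableSpace Y] {l : Filter α} {T : α → Ω → Y} {T₀ : Ω → Y} {f : Y → ℝ}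

theorem integrable_comp_of_abs_le {T : Ω → Y} (hT : Measurable T) (hf : Measurable f) {C : ℝ}
    (hC : ∀ y, |f y| ≤ C) : Integrable (fun ω => f (T ω)) ν :=
  .of_bound (hf.comp hT).aestronglyMeasurable C (.of_forall fun ω => hC (T ω))

variable [TopologicalSpace Y] [BorelSpace Y]

theorem tendsto_integral_abs_comp_sub_comp_of_continuous [l.IsCountablyGenerated]
    (hT : ∀ n, Measurable (T n)) (hT₀ : Measurable T₀)
    (hlim : ∀ ω, Tendsto (fun n => T n ω) l (𝓝 (T₀ ω))) (hf : Continuous f) {C : ℝ}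
    (hC : ∀ y, |f y| ≤ C) :
    Tendsto (fun n => ∫ ω, |f (T n ω) - f (T₀ ω)| ∂ν) l (𝓝 0) := by
  rw [← integral_zero Ω ℝ (μ := ν)]
  refine tendsto_integral_filter_of_dominated_convergence (fun _ => C + C) ?_ ?_
    (integrable_const _) (.of_forall fun ω => ?_)
  · exact .of_forall fun n => ((hf.measurable.comp (hT n)).sub
      (hf.measurable.comp hT₀)).abs.aestronglyMeasurable
  · refine .of_forall fun n => .of_forall fun ω => ?_
    rw [Real.norm_eq_abs, abs_abs]
    exact (abs_sub _ _).trans (add_le_add (hC _) (hC _))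
  · simpa using (((hf.tendsto _).comp (hlim ω)).sub_const (f (T₀ ω))).abs

theorem integral_abs_comp_sub_comp_le {S T : Ω → Y} (hS : Measurable S) (hT : Measurable T)
    (hf : Measurable f) {C : ℝ} (hC : ∀ y, |f y| ≤ C) (h : BoundedContinuousFunction Y ℝ) :
    ∫ ω, |f (S ω) - f (T ω)| ∂ν ≤ ∫ ω, |f (S ω) - h (S ω)| ∂ν +
      (∫ ω, |h (S ω) - h (T ω)| ∂ν + ∫ ω, |f (T ω) - h (T ω)| ∂ν) := by
  have hfi : ∀ {R : Ω → Y}, Measurable R → Integrable (fun ω => f (R ω)) ν := fun hR =>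
    integrable_comp_of_abs_le hR hf hC
  have hhi : ∀ {R : Ω → Y}, Measurable R → Integrable (fun ω => h (R ω)) ν := fun hR =>
    integrable_comp_of_abs_le hR h.continuous.measurable h.norm_coe_le_norm
  have h₁ := ((hfi hS).sub (hhi hS)).abs
  have h₂ := ((hhi hS).sub (hhi hT)).abs
  have h₃ := ((hfi hT).sub (hhi hT)).abs
  calc ∫ ω, |f (S ω) - f (T ω)| ∂ν
      ≤ ∫ ω, |f (S ω) - h (S ω)| + (|h (S ω) - h (T ω)| + |f (T ω) - h (T ω)|) ∂ν := by
        refine integral_mono ((hfi hS).sub (hfi hT)).abs (h₁.add (h₂.add h₃)) fun ω => ?_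
        exact (abs_sub_le _ (h (S ω)) _).trans (add_le_add_right
          ((abs_sub_le _ (h (T ω)) _).trans_eq (by rw [abs_sub_comm (h (T ω))])) _)
    _ = _ := (integral_add h₁ (h₂.add h₃)).trans (congrArg _ (integral_add h₂ h₃))

/-- Approximate `f` in `L¹(T₀_* ν)` by a continuous function `h`; by `hset` the error `|f - h|` is
asymptotically as small along `T n`. -/
theorem tendsto_integral_abs_comp_sub_comp [TopologicalSpace.PseudoMetrizableSpace Y]
    [l.IsCountablyGenerated] (hT : ∀ n, Measurable (T n)) (hT₀ : Measurable T₀)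
    (hlim : ∀ ω, Tendsto (fun n => T n ω) l (𝓝 (T₀ ω)))
    (hset : ∀ k : Y → ℝ, Measurable k → ∀ C, (∀ y, |k y| ≤ C) →
      Tendsto (fun n => ∫ ω, k (T n ω) ∂ν) l (𝓝 (∫ ω, k (T₀ ω) ∂ν)))
    (hf : Measurable f) {C : ℝ} (hC : ∀ y, |f y| ≤ C) :
    Tendsto (fun n => ∫ ω, |f (T n ω) - f (T₀ ω)| ∂ν) l (𝓝 0) := by
  refine tendsto_order.2 ⟨fun ε hε => .of_forall fun n =>
    hε.trans_le (integral_nonneg fun _ => abs_nonneg _), fun ε hε => ?_⟩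
  have hfT : Integrable f (ν.map T₀) :=
    .of_bound hf.aestronglyMeasurable C (.of_forall fun y => hC y)
  obtain ⟨h, hclose, -⟩ := hfT.exists_boundedContinuous_integral_sub_le (ε := ε / 4) (by linarith)
  have hk : Measurable fun y => |f y - h y| := (hf.sub h.continuous.measurable).abs
  simp only [Real.norm_eq_abs] at hclose
  rw [integral_map hT₀.aemeasurable hk.aestronglyMeasurable] at hclose
  have hbound : Tendsto (fun n => ∫ ω, |f (T n ω) - h (T n ω)| ∂ν +
      (∫ ω, |h (T n ω) - h (T₀ ω)| ∂ν + ∫ ω, |f (T₀ ω) - h (T₀ ω)| ∂ν)) l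
      (𝓝 (∫ ω, |f (T₀ ω) - h (T₀ ω)| ∂ν + (0 + ∫ ω, |f (T₀ ω) - h (T₀ ω)| ∂ν))) := by
    refine (hset _ hk (C + ‖h‖) fun y => ?_).add (Tendsto.add_const _ ?_)
    · rw [abs_abs]
      exact (abs_sub _ _).trans (add_le_add (hC y) (h.norm_coe_le_norm y))
    · exact tendsto_integral_abs_comp_sub_comp_of_continuous hT hT₀ hlim h.continuous
        h.norm_coe_le_norm
  filter_upwards [hbound.eventually_lt_const (u := ε) (by linarith)] with n hn
  exact (integral_abs_comp_sub_comp_le (hT n) hT₀ hf hC h).trans_lt hn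

end ConvergenceOfCompositions

/-- The density of `arcsineMeasure a b`; it vanishes off `[a, b]` because `√` is zero on the
negative reals. -/
def arcsineDensity (a b x : ℝ) : ℝ := 1 / (Real.pi * √((x - a) * (b - x)))

section ArcsineDensity

variable {a b : ℝ}

theorem measurable_arcsineDensity (a b : ℝ) : Measurable (arcsineDensity a b) := by
  unfold arcsineDensity
  fun_prop

theorem arcsineDensity_nonneg (a b x : ℝ) : 0 ≤ arcsineDensity a b x := by
  have := Real.pi_pos
  unfold arcsineDensity
  positivity

theorem arcsineDensity_of_nonpos {x : ℝ} (h : (x - a) * (b - x) ≤ 0) :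
    arcsineDensity a b x = 0 := by
  rw [arcsineDensity, Real.sqrt_eq_zero_of_nonpos h, mul_zero, div_zero]

theorem arcsineMeasure_eq_withDensity (hab : a ≤ b) : arcsineMeasure a b =
    volume.withDensity fun x => ENNReal.ofReal (arcsineDensity a b x) := by
  rw [arcsineMeasure, ← withDensity_indicator measurableSet_Icc]
  refine congrArg _ (indicator_eq_self.2 fun x hx => ?_)
  rw [Function.mem_support, ne_eq, ENNReal.ofReal_eq_zero, not_le] at hx
  have hpos : 0 < (x - a) * (b - x) := not_le.1 fun h => hx.ne' (arcsineDensity_of_nonpos h)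
  constructor <;> nlinarith

theorem integrable_arcsineDensity_mul (hab : a < b) {k : ℝ → ℝ}
    (hk : Integrable k (arcsineMeasure a b)) : Integrable fun x => arcsineDensity a b x * k x := by
  rw [arcsineMeasure_eq_withDensity hab.le, integrable_withDensity_iff_integrable_smul'
    (measurable_arcsineDensity a b).ennreal_ofReal
      (.of_forall fun _ => ENNReal.ofReal_lt_top)] at hk
  simpa only [ENNReal.toReal_ofReal (arcsineDensity_nonneg a b _), smul_eq_mul] using hk

theorem integral_arcsineDensity_mul (hab : a < b) {k : ℝ → ℝ} (hk : Measurable k) :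
    ∫ x, arcsineDensity a b x * k x = ∫ e, k (intervalPoint a b e) := by
  rw [← integral_arcsineMeasure hab hk.aestronglyMeasurable, arcsineMeasure_eq_withDensity hab.le,
    integral_withDensity_eq_integral_toReal_smul (measurable_arcsineDensity a b).ennreal_ofReal
      (.of_forall fun x => ENNReal.ofReal_lt_top)]
  simp only [ENNReal.toReal_ofReal (arcsineDensity_nonneg a b _), smul_eq_mul]

theorem integrable_arcsineDensity (hab : a < b) : Integrable (arcsineDensity a b) := by
  have : IsProbabilityMeasure (arcsineMeasure a b) := map_intervalPoint hab ▸
    Measure.isProbabilityMeasure_map (continuous_intervalPoint a b).measurable.aemeasurable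
  simpa using integrable_arcsineDensity_mul hab (integrable_const (1 : ℝ))

theorem integral_arcsineDensity (hab : a < b) : ∫ x, arcsineDensity a b x = 1 := by
  simpa using integral_arcsineDensity_mul hab (measurable_const (a := (1 : ℝ)))

variable {α : Type*} {l : Filter α} {A B : α → ℝ}

theorem tendsto_arcsineDensity {x : ℝ} (ha : x ≠ a) (hb : x ≠ b) (hA : Tendsto A l (𝓝 a))
    (hB : Tendsto B l (𝓝 b)) :
    Tendsto (fun n => arcsineDensity (A n) (B n) x) l (𝓝 (arcsineDensity a b x)) := by
  have h : Tendsto (fun n => (x - A n) * (B n - x)) l (𝓝 ((x - a) * (b - x))) :=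
    (hA.const_sub x).mul (hB.sub_const x)
  rcases lt_or_gt_of_ne (mul_ne_zero (sub_ne_zero.2 ha) (sub_ne_zero.2 hb.symm)) with hneg | hpos
  · rw [arcsineDensity_of_nonpos hneg.le]
    refine tendsto_const_nhds.congr' ?_
    filter_upwards [h.eventually_lt_const hneg] with n hn
    exact (arcsineDensity_of_nonpos hn.le).symm
  · exact tendsto_const_nhds.div (h.sqrt.const_mul _)
      (mul_ne_zero Real.pi_ne_zero (Real.sqrt_ne_zero'.2 hpos))

variable [l.IsCountablyGenerated] (hab : a < b) (hAB : ∀ n, A n < B n) (hA : Tendsto A l (𝓝 a))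
  (hB : Tendsto B l (𝓝 b))
include hab hAB hA hB

theorem tendsto_integral_abs_arcsineDensity_sub :
    Tendsto (fun n => ∫ x, |arcsineDensity (A n) (B n) x - arcsineDensity a b x|) l (𝓝 0) := by
  have h := tendsto_integral_abs_sub_of_le (ν := volume) (l := l) (integrable_zero ℝ ℝ volume)
    (F := fun n x => -arcsineDensity (A n) (B n) x) (f := fun x => -arcsineDensity a b x)
    (fun n => (integrable_arcsineDensity (hAB n)).neg) (integrable_arcsineDensity hab).neg
    (.of_forall fun n x => neg_nonpos.2 (arcsineDensity_nonneg _ _ _)) ?_ ?_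
  · refine h.congr fun n => ?_
    simp only [neg_sub_neg, abs_sub_comm]
  · filter_upwards [Measure.ae_ne volume a, Measure.ae_ne volume b] with x hxa hxb
    exact (tendsto_arcsineDensity hxa hxb hA hB).neg
  · simp only [integral_neg, integral_arcsineDensity hab, fun n => integral_arcsineDensity (hAB n)]
    exact tendsto_const_nhds

theorem tendsto_integral_comp_intervalPoint {k : ℝ → ℝ} (hk : Measurable k) {C : ℝ}
    (hC : ∀ x, |k x| ≤ C) :
    Tendsto (fun n => ∫ e, k (intervalPoint (A n) (B n) e)) l
      (𝓝 (∫ e, k (intervalPoint a b e))) := by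
  have hint : ∀ {p q : ℝ}, p < q → Integrable fun x => arcsineDensity p q x * k x := fun hpq =>
    (integrable_arcsineDensity hpq).mul_bdd hk.aestronglyMeasurable (.of_forall hC)
  rw [tendsto_iff_norm_sub_tendsto_zero]
  have hbound := (tendsto_integral_abs_arcsineDensity_sub hab hAB hA hB).mul_const C
  rw [zero_mul] at hbound
  refine squeeze_zero (fun _ => norm_nonneg _) (fun n => ?_) hbound
  rw [← integral_arcsineDensity_mul (hAB n) hk, ← integral_arcsineDensity_mul hab hk,
    ← integral_sub (hint (hAB n)) (hint hab), ← integral_mul_const]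
  refine (norm_integral_le_integral_norm _).trans (integral_mono_of_nonneg
    (.of_forall fun _ => norm_nonneg _) (((integrable_arcsineDensity (hAB n)).sub
      (integrable_arcsineDensity hab)).abs.mul_const C) (.of_forall fun x => ?_))
  simp only [← sub_mul, norm_mul, Real.norm_eq_abs]
  exact mul_le_mul_of_nonneg_left (hC x) (abs_nonneg _)

theorem tendsto_integral_abs_comp_intervalPoint_sub {f : ℝ → ℝ} (hf : Measurable f) {C : ℝ}
    (hC : ∀ x, |f x| ≤ C) :
    Tendsto (fun n => ∫ e, |f (intervalPoint (A n) (B n) e) - f (intervalPoint a b e)|) l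
      (𝓝 0) := by
  refine tendsto_integral_abs_comp_sub_comp (fun n => (continuous_intervalPoint _ _).measurable)
    (continuous_intervalPoint _ _).measurable (fun e => ?_)
    (fun k hk C hC => tendsto_integral_comp_intervalPoint hab hAB hA hB hk hC) hf hC
  exact ((hA.add hB).div_const 2).add (((hB.sub hA).div_const 2).mul_const _)

end ArcsineDensity

section OuterFunction

variable {a b : ℝ} {g : ℝ → ℝ}

theorem exteriorKernel_ofReal_im {y : ℝ} (hab : a < b) (hy : y ∉ Icc a b) (e : Circle) :
    (exteriorKernel a b y e).im = 0 := by
  have hpos : 0 < (y - b) / (y - a) := by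
    rcases not_and_or.1 hy with h | h
    · exact div_pos_of_neg_of_neg (by linarith) (by linarith)
    · exact div_pos (by linarith) (by linarith)
  have hreal : exteriorKernel a b y e = ((y - a) * Real.exp (1 / 2 * Real.log ((y - b) / (y - a))) /
      (y - intervalPoint a b e) : ℝ) := by
    push_cast [exteriorKernel, wBranch, Complex.ofReal_log hpos.le]
    rfl
  rw [hreal, Complex.ofReal_im]

theorem omegaFun_eq_exp_integral (hab : a < b)
    (hg : AEStronglyMeasurable (fun x => Real.log (g x)) (arcsineMeasure a b)) (z : ℂ) :
    OmegaFun a b g z = Complex.exp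
      (∫ e, exteriorKernel a b z e * (Real.log (g (intervalPoint a b e)) : ℂ)) := by
  have hmeas : AEStronglyMeasurable (fun x : ℝ => (Real.log (g x) : ℂ) / (z - x))
      (arcsineMeasure a b) :=
    ((Complex.continuous_ofReal.comp_aestronglyMeasurable hg).aemeasurable.div
      (by fun_prop)).aestronglyMeasurable
  rw [OmegaFun, cauchyT, integral_arcsineMeasure hab hmeas, ← integral_const_mul]
  simp only [exteriorKernel, mul_div_assoc', div_mul_eq_mul_div]

theorem omegaFun_ofReal_re (hab : a < b)
    (hg : AEStronglyMeasurable (fun x => Real.log (g x)) (arcsineMeasure a b)) {y : ℝ}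
    (hy : y ∉ Icc a b) : (OmegaFun a b g y).re = Real.exp
      (∫ e, (exteriorKernel a b y e).re * Real.log (g (intervalPoint a b e))) := by
  have hreal : ∀ e, exteriorKernel a b y e * (Real.log (g (intervalPoint a b e)) : ℂ) =
      ((exteriorKernel a b y e).re * Real.log (g (intervalPoint a b e)) : ℝ) := fun e => by
    rw [Complex.ofReal_mul]
    exact congrArg (· * _) (Complex.ext rfl (exteriorKernel_ofReal_im hab hy e))
  rw [omegaFun_eq_exp_integral hab hg]
  simp only [hreal, integral_complex_ofReal, Complex.exp_ofReal_re]

end OuterFunction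

section ArcsineWeight

variable {a b : ℝ} {w : ℝ → ℝ}

/-- The density `v_Δ = π w √((x - a)(b - x))` with respect to `arcsineMeasure a b` of the measure
with Lebesgue density `w`. -/
def arcsineWeight (w : ℝ → ℝ) (a b x : ℝ) : ℝ := Real.pi * w x * √((x - a) * (b - x))

theorem measurable_arcsineWeight (hw : Measurable w) (a b : ℝ) :
    Measurable (arcsineWeight w a b) := by
  unfold arcsineWeight
  fun_prop

/-- The indicator function of `{f ≠ 0}`. Since `Real.log 0 = 0`, it is the factor with which the
logarithms of the other terms enter `log (f * g)`. -/
def supportIndicator {X : Type*} (f : X → ℝ) : X → ℝ := (Function.support f).indicator 1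

theorem supportIndicator_of_eq_zero {X : Type*} {f : X → ℝ} {x : X} (h : f x = 0) :
    supportIndicator f x = 0 := indicator_of_notMem (by simpa using h) _

theorem supportIndicator_of_ne_zero {X : Type*} {f : X → ℝ} {x : X} (h : f x ≠ 0) :
    supportIndicator f x = 1 := indicator_of_mem (by simpa using h) _

theorem supportIndicator_mem_Icc {X : Type*} (f : X → ℝ) (x : X) :
    supportIndicator f x ∈ Icc (0 : ℝ) 1 := by
  by_cases h : f x = 0
  · simp [supportIndicator_of_eq_zero h]
  · simp [supportIndicator_of_ne_zero h]

theorem abs_supportIndicator_le_one {X : Type*} (f : X → ℝ) (x : X) :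
    |supportIndicator f x| ≤ 1 :=
  abs_le.2 ⟨by linarith [(supportIndicator_mem_Icc f x).1], (supportIndicator_mem_Icc f x).2⟩

theorem measurable_supportIndicator {X : Type*} [MeasurableSpace X] {f : X → ℝ}
    (hf : Measurable f) : Measurable (supportIndicator f) :=
  measurable_one.indicator (measurableSet_support hf)

theorem log_mul_eq_add_supportIndicator_mul {X : Type*} (f : X → ℝ) (x : X) {c : ℝ} (hc : c ≠ 0) :
    Real.log (f x * c) = Real.log (f x) + supportIndicator f x * Real.log c := by
  by_cases h : f x = 0
  · simp [supportIndicator_of_eq_zero h, h]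
  · rw [supportIndicator_of_ne_zero h, Real.log_mul h hc, one_mul]

theorem log_eq_of_sq_mul_exp_eq {X : Type*} {f : X → ℝ} {x : X} {y q : ℝ}
    (h : y ^ 2 * Real.exp (-2 * q) = f x) :
    Real.log y = 1 / 2 * Real.log (f x) + supportIndicator f x * q := by
  by_cases hf : f x = 0
  · have hy : y = 0 := by simpa [hf] using h
    simp [supportIndicator_of_eq_zero hf, hf, hy]
  · have hy : y ≠ 0 := fun hy => hf (by rw [← h, hy]; ring)
    rw [supportIndicator_of_ne_zero hf, ← h, Real.log_mul (pow_ne_zero 2 hy) (Real.exp_ne_zero _),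
      Real.log_pow, Real.log_exp]
    push_cast
    ring

theorem ae_circle_im_ne_zero : ∀ᵐ e : Circle, (e : ℂ).im ≠ 0 := by
  filter_upwards [ae_circle_coe_ne 1, ae_circle_coe_ne (-1)] with e h₁ h₂ him
  have hsq := circle_re_sq_add_im_sq e
  rw [him, zero_pow two_ne_zero, add_zero, ← one_pow 2, sq_eq_sq_iff_eq_or_eq_neg] at hsq
  exact hsq.elim (fun hre => h₁ (Complex.ext hre him)) fun hre =>
    h₂ (Complex.ext hre (by simpa using him))

/-- On the circle, `|e - 1| |e + 1| = 2 |im e|`. -/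
theorem integrable_log_abs_circle_im : Integrable fun e : Circle => Real.log |(e : ℂ).im| := by
  refine (((integrable_log_norm_circle_sub 1).add (integrable_log_norm_circle_sub (-1))).sub
    (integrable_const (Real.log 2))).congr ?_
  filter_upwards [ae_circle_im_ne_zero, ae_circle_coe_ne 1, ae_circle_coe_ne (-1)] with e h h₁ h₂
  have hmul : ‖(e : ℂ) - 1‖ * ‖(e : ℂ) - -1‖ = 2 * |(e : ℂ).im| := by
    rw [← sq_eq_sq₀ (by positivity) (by positivity), mul_pow, mul_pow, sq_abs, Complex.sq_norm,
      Complex.sq_norm, Complex.normSq_apply, Complex.normSq_apply]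
    have hsq := circle_re_sq_add_im_sq e
    simp only [Complex.sub_re, Complex.sub_im, Complex.neg_re, Complex.neg_im, Complex.one_re,
      Complex.one_im]
    linear_combination ((e : ℂ).re ^ 2 + (e : ℂ).im ^ 2 - 1) * hsq
  simp only [Pi.sub_apply, Pi.add_apply]
  rw [← Real.log_mul (norm_ne_zero_iff.2 (sub_ne_zero.2 h₁))
      (norm_ne_zero_iff.2 (sub_ne_zero.2 h₂)), hmul, Real.log_mul two_ne_zero (abs_ne_zero.2 h),
    add_sub_cancel_left]

theorem arcsineWeight_intervalPoint (hab : a ≤ b) (w : ℝ → ℝ) (e : Circle) :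
    arcsineWeight w a b (intervalPoint a b e) =
      w (intervalPoint a b e) * (Real.pi * ((b - a) / 2) * |(e : ℂ).im|) := by
  rw [arcsineWeight, sqrt_intervalPoint hab]
  ring

theorem log_arcsineWeight_intervalPoint (hab : a < b) (w : ℝ → ℝ) {e : Circle}
    (he : (e : ℂ).im ≠ 0) : Real.log (arcsineWeight w a b (intervalPoint a b e)) =
      Real.log (w (intervalPoint a b e)) + supportIndicator w (intervalPoint a b e) *
        (Real.log (Real.pi * ((b - a) / 2)) + Real.log |(e : ℂ).im|) := by
  have hc : Real.pi * ((b - a) / 2) ≠ 0 := by have := Real.pi_pos; nlinarith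
  have him := abs_ne_zero.2 he
  rw [arcsineWeight_intervalPoint hab.le, ← Real.log_mul hc him]
  exact log_mul_eq_add_supportIndicator_mul w _ (mul_ne_zero hc him)

theorem supportIndicator_arcsineWeight_intervalPoint (hab : a < b) (w : ℝ → ℝ) {e : Circle}
    (he : (e : ℂ).im ≠ 0) : supportIndicator (arcsineWeight w a b) (intervalPoint a b e) =
      supportIndicator w (intervalPoint a b e) := by
  have hc : Real.pi * ((b - a) / 2) * |(e : ℂ).im| ≠ 0 := by
    have := Real.pi_pos
    have := abs_pos.2 he
    have := sub_pos.2 hab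
    positivity
  by_cases h : w (intervalPoint a b e) = 0
  · rw [supportIndicator_of_eq_zero h, supportIndicator_of_eq_zero]
    rw [arcsineWeight_intervalPoint hab.le, h, zero_mul]
  · rw [supportIndicator_of_ne_zero h, supportIndicator_of_ne_zero]
    rw [arcsineWeight_intervalPoint hab.le]
    exact mul_ne_zero h hc

end ArcsineWeight

section SzegoEquation

variable {d : ℕ} (p : IntervalSystem d)

namespace IntervalSystem

/-- A function on each interval of `p`, lifted to the circles covering the intervals. -/
def pullback (f : Fin d → ℝ → ℝ) (x : Fin d × Circle) : ℝ :=
  f x.1 (intervalPoint (p.left x.1) (p.right x.1) x.2)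

variable {p}

theorem measurable_pullback {f : Fin d → ℝ → ℝ} (hf : ∀ i, Measurable (f i)) :
    Measurable (p.pullback f) :=
  measurable_from_prod_countable_right fun i =>
    (hf i).comp (continuous_intervalPoint (p.left i) (p.right i)).measurable

theorem ae_familyMeasure_of_ae_arcsineMeasure {P : Fin d → ℝ → Prop}
    (h : ∀ i, ∀ᵐ x ∂arcsineMeasure (p.left i) (p.right i), P i x) :
    ∀ᵐ x ∂familyMeasure d, P x.1 (intervalPoint (p.left x.1) (p.right x.1) x.2) :=
  ae_familyMeasure_iff.2 fun i =>
    (measurePreserving_intervalPoint (p.left_lt_right i)).quasiMeasurePreserving.ae (h i)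

theorem integrable_pullback {f : Fin d → ℝ → ℝ}
    (hf : ∀ i, Integrable (f i) (arcsineMeasure (p.left i) (p.right i))) :
    Integrable (p.pullback f) (familyMeasure d) :=
  integrable_familyMeasure_iff.2 fun i =>
    (measurePreserving_intervalPoint (p.left_lt_right i)).integrable_comp_of_integrable (hf i)

theorem integrable_interaction_mul {u : Fin d × Circle → ℝ} (hu : Integrable u (familyMeasure d))
    (t : Fin d × Circle) : Integrable (fun s => p.interaction s t * u s) (familyMeasure d) := by
  have hκ : Continuous fun s => interactionMap d p s t := by fun_prop
  exact hu.bdd_mul hκ.aestronglyMeasurable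
    (.of_forall fun s => (⟨_, hκ⟩ : C(Fin d × Circle, ℝ)).norm_coe_le_norm s)

theorem integral_interaction_mul {u : Fin d × Circle → ℝ} (hu : Integrable u (familyMeasure d))
    (i : Fin d) (e : Circle) : ∫ s, p.interaction s (i, e) * u s ∂familyMeasure d =
      -(1 / 2) * ∑ j ∈ Finset.univ.erase i, ∫ s, (exteriorKernel (p.left j) (p.right j)
        (intervalPoint (p.left i) (p.right i) e) s).re * u (j, s) := by
  rw [integral_familyMeasure (integrable_interaction_mul hu _),
    ← Finset.add_sum_erase _ _ (Finset.mem_univ i), Finset.mul_sum]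
  simp only [interaction, if_true, zero_mul, integral_zero, zero_add]
  refine Finset.sum_congr rfl fun j hj => ?_
  simp only [if_neg (Finset.ne_of_mem_erase hj), mul_assoc, integral_const_mul]

theorem integrable_integral_interaction_mul {u : Fin d × Circle → ℝ}
    (hu : Integrable u (familyMeasure d)) :
    Integrable (fun t => ∫ s, p.interaction s t * u s ∂familyMeasure d) (familyMeasure d) := by
  have h := integrable_mul_kernel_mul hu (integrable_const (1 : ℝ)) (interactionMap d p)
  simpa [mul_comm] using h.integral_prod_right

end IntervalSystem

namespace IsSzegoVector

open IntervalSystem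

variable {p} {v g : Fin d → ℝ → ℝ} {S : Fin d → ℂ → ℂ}
  (h : IsSzegoVector d p.left p.right v g S)
include h

theorem integrable_log : Integrable (fun x => Real.log (p.pullback g x)) (familyMeasure d) :=
  integrable_pullback h.2.1

theorem apply_eq_exp_integral (i : Fin d) (z : ℂ) : S i z = Complex.exp
    (∫ e, exteriorKernel (p.left i) (p.right i) z e * (Real.log (p.pullback g (i, e)) : ℂ)) := by
  rw [h.2.2.1 i]
  exact omegaFun_eq_exp_integral (p.left_lt_right i) (h.2.1 i).aestronglyMeasurable z

theorem prod_re_eq_exp (i : Fin d) (e : Circle) :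
    ∏ j ∈ Finset.univ.erase i, (S j (intervalPoint (p.left i) (p.right i) e)).re = Real.exp
      (-2 * ∫ s, p.interaction s (i, e) * Real.log (p.pullback g s) ∂familyMeasure d) := by
  rw [integral_interaction_mul h.integrable_log, ← mul_assoc,
    show (-2 * -(1 / 2) : ℝ) = 1 by norm_num, one_mul, Real.exp_sum]
  refine Finset.prod_congr rfl fun j hj => ?_
  rw [h.2.2.1 j]
  exact omegaFun_ofReal_re (p.left_lt_right j) (h.2.1 j).aestronglyMeasurable
    ((p.disjoint (Finset.ne_of_mem_erase hj)).notMem_of_mem_right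
      (intervalPoint_mem_Icc (p.left_lt_right i).le e))

theorem log_ae_eq : ∀ᵐ t ∂familyMeasure d, Real.log (p.pullback g t) =
    1 / 2 * Real.log (p.pullback v t) + supportIndicator (p.pullback v) t *
      ∫ s, p.interaction s t * Real.log (p.pullback g s) ∂familyMeasure d := by
  filter_upwards [ae_familyMeasure_of_ae_arcsineMeasure h.2.2.2] with t ht
  rw [h.prod_re_eq_exp] at ht
  exact log_eq_of_sq_mul_exp_eq ht

theorem integrable_half_log_weight (hv : ∀ i, Measurable (v i)) :
    Integrable (fun t => 1 / 2 * Real.log (p.pullback v t)) (familyMeasure d) := by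
  have hθ := measurable_supportIndicator (measurable_pullback (p := p) hv)
  have hint := integrable_integral_interaction_mul (p := p) h.integrable_log
  refine (h.integrable_log.sub (hint.bdd_mul hθ.aestronglyMeasurable
    (.of_forall (abs_supportIndicator_le_one _)))).congr ?_
  filter_upwards [h.log_ae_eq] with t ht
  exact sub_eq_of_eq_add ht

end IsSzegoVector

end SzegoEquation

section WeightConvergence

variable {Ω α : Type*} [MeasurableSpace Ω] {ν : Measure Ω} {L : Ω → ℝ}

theorem max_abs_sub_natCast_le (x : ℝ) (M : ℕ) : ‖max (|x| - M) 0‖ ≤ |x| := by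
  rw [Real.norm_eq_abs, abs_of_nonneg (le_max_right _ _)]
  exact max_le (sub_le_self _ M.cast_nonneg) (abs_nonneg _)

theorem aestronglyMeasurable_max_abs_sub (hL : Integrable L ν) (M : ℕ) :
    AEStronglyMeasurable (fun ω => max (|L ω| - M) 0) ν :=
  (hL.abs.aestronglyMeasurable.sub aestronglyMeasurable_const).sup aestronglyMeasurable_const

theorem tendsto_integral_max_abs_sub (hL : Integrable L ν) :
    Tendsto (fun M : ℕ => ∫ ω, max (|L ω| - M) 0 ∂ν) atTop (𝓝 0) := by
  suffices h : Tendsto (fun M : ℕ => ∫ ω, max (|L ω| - M) 0 ∂ν) atTop (𝓝 (∫ _, (0 : ℝ) ∂ν)) by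
    simpa only [integral_zero] using h
  refine tendsto_integral_of_dominated_convergence (fun ω => |L ω|)
    (aestronglyMeasurable_max_abs_sub hL) hL.abs
    (fun M => .of_forall fun ω => max_abs_sub_natCast_le _ M) (.of_forall fun ω => ?_)
  refine tendsto_const_nhds.congr' ?_
  filter_upwards [eventually_ge_atTop ⌈|L ω|⌉₊] with M hM
  exact (max_eq_right (sub_nonpos.2 (Nat.ceil_le.1 hM))).symm

/-- Split `L` at height `M`: `|D L| ≤ M |D| + C (|L| - M)⁺`. -/
theorem tendsto_integral_abs_mul_of_abs_le {l : Filter α} {D : α → Ω → ℝ} {C : ℝ}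
    (hD : ∀ n, Integrable (D n) ν) (hC : ∀ n ω, |D n ω| ≤ C) (hL : Integrable L ν)
    (h : Tendsto (fun n => ∫ ω, |D n ω| ∂ν) l (𝓝 0)) :
    Tendsto (fun n => ∫ ω, |D n ω * L ω| ∂ν) l (𝓝 0) := by
  refine tendsto_order.2 ⟨fun ε hε => .of_forall fun n =>
    hε.trans_le (integral_nonneg fun _ => abs_nonneg _), fun ε hε => ?_⟩
  have htail := (tendsto_integral_max_abs_sub hL).const_mul C
  rw [mul_zero] at htail
  obtain ⟨M, hM⟩ := (htail.eventually_lt_const (half_pos hε)).exists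
  have hhead := h.const_mul (M : ℝ)
  rw [mul_zero] at hhead
  have hmax : Integrable (fun ω => max (|L ω| - M) 0) ν :=
    hL.abs.mono' (aestronglyMeasurable_max_abs_sub hL M)
      (.of_forall fun ω => max_abs_sub_natCast_le _ M)
  filter_upwards [hhead.eventually_lt_const (half_pos hε)] with n hn
  calc ∫ ω, |D n ω * L ω| ∂ν
      ≤ ∫ ω, M * |D n ω| + C * max (|L ω| - M) 0 ∂ν := by
        refine integral_mono_of_nonneg (.of_forall fun _ => abs_nonneg _)
          (((hD n).abs.const_mul _).add (hmax.const_mul C)) (.of_forall fun ω => ?_)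
        have hle : |L ω| ≤ M + max (|L ω| - M) 0 := by linarith [le_max_left (|L ω| - M) 0]
        calc |D n ω * L ω| ≤ |D n ω| * (M + max (|L ω| - M) 0) := by
              rw [abs_mul]
              exact mul_le_mul_of_nonneg_left hle (abs_nonneg _)
          _ ≤ M * |D n ω| + C * max (|L ω| - M) 0 := by
              rw [mul_add, mul_comm _ (M : ℝ)]
              exact add_le_add_right
                (mul_le_mul_of_nonneg_right (hC n ω) (le_max_right _ _)) _
    _ = M * ∫ ω, |D n ω| ∂ν + C * ∫ ω, max (|L ω| - M) 0 ∂ν := by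
        rw [integral_add ((hD n).abs.const_mul _) (hmax.const_mul C), integral_const_mul,
          integral_const_mul]
    _ < ε := by linarith

end WeightConvergence

section ArcsineWeightConvergence

theorem affIcc_intervalPoint {a b : ℝ} (hab : a < b) (c d : ℝ) (e : Circle) :
    affIcc a b c d (intervalPoint a b e) = intervalPoint c d e := by
  have h : b - a ≠ 0 := sub_ne_zero.2 hab.ne'
  unfold affIcc intervalPoint
  field_simp
  ring

theorem abs_half_add_mul_sub_half_add_mul_le {t t₀ : ℝ} (ht : |t| ≤ 1) (s s₀ k k₀ m : ℝ) :
    |1 / 2 * (s + t * (k + m)) - 1 / 2 * (s₀ + t₀ * (k₀ + m))| ≤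
      |s₀ - s| + (|(t - t₀) * (k₀ + m)| + |k - k₀|) := by
  have hsplit : 1 / 2 * (s + t * (k + m)) - 1 / 2 * (s₀ + t₀ * (k₀ + m)) =
      1 / 2 * ((s - s₀) + ((t - t₀) * (k₀ + m) + t * (k - k₀))) := by ring
  have hlast : |t * (k - k₀)| ≤ |k - k₀| := by
    rw [abs_mul]
    exact mul_le_of_le_one_left (abs_nonneg _) ht
  rw [hsplit, abs_mul, abs_of_pos one_half_pos, abs_sub_comm s₀]
  have h₁ := abs_add_le (s - s₀) ((t - t₀) * (k₀ + m) + t * (k - k₀))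
  have h₂ := abs_add_le ((t - t₀) * (k₀ + m)) (t * (k - k₀))
  linarith [abs_nonneg (s - s₀ + ((t - t₀) * (k₀ + m) + t * (k - k₀)))]

variable {a b : ℝ} {w : ℝ → ℝ}

theorem abs_supportIndicator_sub_le (f : ℝ → ℝ) (x y : ℝ) :
    |supportIndicator f x - supportIndicator f y| ≤ 1 :=
  Real.dist_le_of_mem_Icc_01 (supportIndicator_mem_Icc f x) (supportIndicator_mem_Icc f y)

theorem integrable_supportIndicator_comp (hw : Measurable w) (a b : ℝ) :
    Integrable fun e : Circle => supportIndicator w (intervalPoint a b e) :=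
  integrable_comp_of_abs_le (continuous_intervalPoint a b).measurable
    (measurable_supportIndicator hw) (abs_supportIndicator_le_one w)

theorem integrable_log_comp_intervalPoint (hab : a < b) (hw : Measurable w)
    (h : Integrable fun e => 1 / 2 * Real.log (arcsineWeight w a b (intervalPoint a b e))) :
    Integrable fun e => Real.log (w (intervalPoint a b e)) := by
  have hθ := (integrable_supportIndicator_comp hw a b).aestronglyMeasurable
  refine ((h.const_mul 2).sub (((integrable_const (Real.log (Real.pi * ((b - a) / 2)))).add
    integrable_log_abs_circle_im).bdd_mul hθ
      (.of_forall fun e => abs_supportIndicator_le_one w _))).congr ?_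
  filter_upwards [ae_circle_im_ne_zero] with e he
  simp only [Pi.sub_apply, Pi.add_apply, log_arcsineWeight_intervalPoint hab w he]
  ring

theorem integral_abs_half_log_arcsineWeight_sub_le (hab : a < b) {c d : ℝ} (hcd : c < d)
    (hw : Measurable w)
    (hint : Integrable fun e => 1 / 2 * Real.log (arcsineWeight w a b (intervalPoint a b e)))
    (hint' : Integrable fun e => 1 / 2 * Real.log (arcsineWeight w c d (intervalPoint c d e))) :
    ∫ e, |1 / 2 * Real.log (arcsineWeight w c d (intervalPoint c d e)) -
        1 / 2 * Real.log (arcsineWeight w a b (intervalPoint a b e))| ≤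
      (∫ e, |Real.log (w (intervalPoint a b e)) - Real.log (w (intervalPoint c d e))|) +
        ((∫ e : Circle, |(supportIndicator w (intervalPoint c d e) -
          supportIndicator w (intervalPoint a b e)) *
            (Real.log (Real.pi * ((b - a) / 2)) + Real.log |(e : ℂ).im|)|) +
        |Real.log (Real.pi * ((d - c) / 2)) - Real.log (Real.pi * ((b - a) / 2))|) := by
  have hlog : Integrable fun e : Circle =>
      |Real.log (w (intervalPoint a b e)) - Real.log (w (intervalPoint c d e))| :=
    ((integrable_log_comp_intervalPoint hab hw hint).sub
      (integrable_log_comp_intervalPoint hcd hw hint')).abs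
  have hsupp : Integrable fun e : Circle => |(supportIndicator w (intervalPoint c d e) -
      supportIndicator w (intervalPoint a b e)) *
        (Real.log (Real.pi * ((b - a) / 2)) + Real.log |(e : ℂ).im|)| :=
    (((integrable_const _).add integrable_log_abs_circle_im).bdd_mul
      ((integrable_supportIndicator_comp hw c d).sub
        (integrable_supportIndicator_comp hw a b)).aestronglyMeasurable
      (.of_forall fun _ => abs_supportIndicator_sub_le w _ _)).abs
  have hlen := integrable_const (α := Circle) (μ := volume)
    |Real.log (Real.pi * ((d - c) / 2)) - Real.log (Real.pi * ((b - a) / 2))|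
  refine (integral_mono_ae (hint'.sub hint).abs (hlog.add (hsupp.add hlen)) ?_).trans_eq ?_
  swap
  · rw [integral_add' hlog (hsupp.add hlen), integral_add' hsupp hlen, integral_const,
      probReal_univ, one_smul]
  filter_upwards [ae_circle_im_ne_zero] with e he
  simp only [Pi.add_apply, Pi.sub_apply]
  rw [log_arcsineWeight_intervalPoint hcd w he, log_arcsineWeight_intervalPoint hab w he]
  exact abs_half_add_mul_sub_half_add_mul_le (abs_supportIndicator_le_one w _) ..

variable {α : Type*} {l : Filter α} {A B : α → ℝ}

theorem tendsto_integral_abs_log_comp_intervalPoint_sub (hab : a < b) (hw : Measurable w)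
    (h : Tendsto (fun n => ∫ x, |Real.log (w x) - Real.log (w (affIcc a b (A n) (B n) x))|
      ∂arcsineMeasure a b) l (𝓝 0)) :
    Tendsto (fun n => ∫ e, |Real.log (w (intervalPoint a b e)) -
      Real.log (w (intervalPoint (A n) (B n) e))|) l (𝓝 0) := by
  refine h.congr fun n => ?_
  have haff : Measurable (affIcc a b (A n) (B n)) := by unfold affIcc; fun_prop
  have hmeas : Measurable fun x =>
      |Real.log (w x) - Real.log (w (affIcc a b (A n) (B n) x))| :=
    (hw.log.sub (hw.comp haff).log).abs
  simp only [integral_arcsineMeasure hab hmeas.aestronglyMeasurable, affIcc_intervalPoint hab]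

theorem tendsto_integral_abs_half_log_arcsineWeight_sub [l.IsCountablyGenerated]
    (hab : a < b) (hAB : ∀ n, A n < B n)
    (hA : Tendsto A l (𝓝 a)) (hB : Tendsto B l (𝓝 b)) (hw : Measurable w)
    (hint : ∀ n, Integrable fun e =>
      1 / 2 * Real.log (arcsineWeight w (A n) (B n) (intervalPoint (A n) (B n) e)))
    (hint₀ : Integrable fun e => 1 / 2 * Real.log (arcsineWeight w a b (intervalPoint a b e)))
    (h : Tendsto (fun n => ∫ x, |Real.log (w x) - Real.log (w (affIcc a b (A n) (B n) x))|
      ∂arcsineMeasure a b) l (𝓝 0)) :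
    Tendsto (fun n => ∫ e,
      |1 / 2 * Real.log (arcsineWeight w (A n) (B n) (intervalPoint (A n) (B n) e)) -
        1 / 2 * Real.log (arcsineWeight w a b (intervalPoint a b e))|) l (𝓝 0) := by
  have hlog := tendsto_integral_abs_log_comp_intervalPoint_sub hab hw h
  have hsupp := tendsto_integral_abs_mul_of_abs_le
    (fun n => (integrable_supportIndicator_comp hw (A n) (B n)).sub
      (integrable_supportIndicator_comp hw a b))
    (fun n e => abs_supportIndicator_sub_le w _ _)
    ((integrable_const (Real.log (Real.pi * ((b - a) / 2)))).add integrable_log_abs_circle_im)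
    (tendsto_integral_abs_comp_intervalPoint_sub hab hAB hA hB (measurable_supportIndicator hw)
      (abs_supportIndicator_le_one w))
  have hlen : Tendsto (fun n => |Real.log (Real.pi * ((B n - A n) / 2)) -
      Real.log (Real.pi * ((b - a) / 2))|) l (𝓝 0) := by
    have hpos : 0 < Real.pi * ((b - a) / 2) := mul_pos Real.pi_pos (half_pos (sub_pos.2 hab))
    exact tendsto_iff_norm_sub_tendsto_zero.1
      ((((hB.sub hA).div_const 2).const_mul Real.pi).log hpos.ne')
  have hlim := hlog.add (hsupp.add hlen)
  rw [add_zero, add_zero] at hlim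
  exact squeeze_zero (fun _ => integral_nonneg fun _ => abs_nonneg _) (fun n =>
    integral_abs_half_log_arcsineWeight_sub_le hab (hAB n) hw hint₀ (hint n)) hlim

end ArcsineWeightConvergence

section LocallyUniformConvergence

variable {E X Y : Type*} [TopologicalSpace E] [TopologicalSpace X] {U : Set X}

theorem tendsto_of_continuous_of_isOpen [TopologicalSpace Y] (hU : IsOpen U) {G : E × U → Y}
    (hG : Continuous G) {β : Type*} {m : Filter β} {y : β → E × X} {y₀ : E × X}
    (hy : Tendsto y m (𝓝 y₀)) (hy₀ : y₀.2 ∈ U) {H : β → Y}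
    (hH : ∀ b (h : (y b).2 ∈ U), H b = G ((y b).1, ⟨(y b).2, h⟩)) :
    Tendsto H m (𝓝 (G (y₀.1, ⟨y₀.2, hy₀⟩))) := by
  have hopen : IsOpenEmbedding (Prod.map id Subtype.val : E × U → E × X) :=
    IsOpenEmbedding.id.prodMap hU.isOpenEmbedding_subtypeVal
  refine fun V hV => mem_map.2 ?_
  have hmem := hopen.image_mem_nhds.2 (hG.continuousAt hV)
  filter_upwards [hy hmem] with b hb
  obtain ⟨⟨e, x⟩, hV, heq⟩ := hb
  have hbU : (y b).2 ∈ U := heq ▸ x.2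
  have hx : (⟨(y b).2, hbU⟩ : U) = x := Subtype.ext (congrArg Prod.snd heq).symm
  rw [mem_preimage, hH b hbU, hx, ← heq]
  exact hV

theorem tendstoLocallyUniformlyOn_of_continuous {P Z α : Type*} [TopologicalSpace P]
    [TopologicalSpace Z] [UniformSpace Y] {U : Set (P × Z)} (hU : IsOpen U)
    {G : E × U → Y} (hG : Continuous G) {l : Filter α} {p : α → P} {p₀ : P} {φ : α → E} {φ₀ : E}
    {F : α → Z → Y} {F₀ : Z → Y} (hp : Tendsto p l (𝓝 p₀)) (hφ : Tendsto φ l (𝓝 φ₀))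
    (hF : ∀ n z (h : (p n, z) ∈ U), F n z = G (φ n, ⟨_, h⟩))
    (hF₀ : ∀ z (h : (p₀, z) ∈ U), F₀ z = G (φ₀, ⟨_, h⟩)) :
    TendstoLocallyUniformlyOn F F₀ l {z | (p₀, z) ∈ U} := by
  have hopen : IsOpen {z | (p₀, z) ∈ U} := hU.preimage (by fun_prop)
  refine tendstoLocallyUniformlyOn_iff_filter.2 fun z hz => ?_
  rw [hopen.nhdsWithin_eq hz, tendstoUniformlyOnFilter_iff_tendsto]
  have hlim : Tendsto (fun q : α × Z => F q.1 q.2) (l ×ˢ 𝓝 z) (𝓝 (G (φ₀, ⟨(p₀, z), hz⟩))) :=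
    tendsto_of_continuous_of_isOpen hU hG ((hφ.comp tendsto_fst).prodMk_nhds
      ((hp.comp tendsto_fst).prodMk_nhds tendsto_snd)) hz fun q => hF q.1 q.2
  have hlim₀ : Tendsto (fun q : α × Z => F₀ q.2) (l ×ˢ 𝓝 z) (𝓝 (G (φ₀, ⟨(p₀, z), hz⟩))) :=
    tendsto_of_continuous_of_isOpen hU hG (tendsto_const_nhds.prodMk_nhds
      (tendsto_const_nhds.prodMk_nhds tendsto_snd)) hz fun q => hF₀ q.2
  exact (hlim₀.prodMk_nhds hlim).mono_right (nhds_le_uniformity _)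

end LocallyUniformConvergence

section Convergence

variable {d : ℕ}

namespace IntervalSystem

/-- The densities of the measures `w i dx` with respect to the arcsine distributions of the
intervals. -/
def weight (p : IntervalSystem d) (w : Fin d → ℝ → ℝ) (i : Fin d) : ℝ → ℝ :=
  arcsineWeight (w i) (p.left i) (p.right i)

/-- The pairs of a system of intervals and a point outside its `i`-th interval. -/
def exteriorPoints (i : Fin d) : Set (IntervalSystem d × ℂ) :=
  {q | q.2 ∉ Complex.ofReal '' Icc (q.1.left i) (q.1.right i)}

theorem isOpen_exteriorPoints (i : Fin d) : IsOpen (exteriorPoints i) := by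
  have h : exteriorPoints i = {q : IntervalSystem d × ℂ |
      q.2.im ≠ 0 ∨ q.2.re < q.1.left i ∨ q.1.right i < q.2.re} := by
    ext ⟨p, z⟩
    refine not_iff_comm.1 ⟨fun hz => ?_, ?_⟩
    · simp only [mem_ofPred_eq, not_or, not_not, not_lt] at hz
      exact ⟨z.re, hz.2, Complex.ext rfl hz.1.symm⟩
    · rintro ⟨x, hx, rfl⟩
      simpa using hx
  have hre : Continuous fun q : IntervalSystem d × ℂ => q.2.re := by fun_prop
  have him : Continuous fun q : IntervalSystem d × ℂ => q.2.im := by fun_prop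
  have hleft : Continuous fun q : IntervalSystem d × ℂ => q.1.left i := by fun_prop
  have hright : Continuous fun q : IntervalSystem d × ℂ => q.1.right i := by fun_prop
  rw [h]
  exact (isOpen_ne_fun him continuous_const).union
    ((isOpen_lt hre hleft).union (isOpen_lt hright hre))

theorem continuous_exteriorKernel_exteriorPoints (L : ℂ →L[ℝ] ℝ) (i : Fin d) :
    Continuous fun q : exteriorPoints i × (Fin d × Circle) =>
      if q.2.1 = i then L (exteriorKernel (q.1.1.1.left i) (q.1.1.1.right i) q.1.1.2 q.2.2)
        else 0 := by
  have hj : ∀ j : Fin d, Continuous fun q : exteriorPoints i × Circle =>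
      if j = i then L (exteriorKernel (q.1.1.1.left i) (q.1.1.1.right i) q.1.1.2 q.2)
        else 0 := fun j => by
    by_cases hji : j = i
    · simp only [hji, if_true]
      exact L.continuous.comp (continuous_exteriorKernel_comp (by fun_prop) (by fun_prop)
        (by fun_prop) (by fun_prop) (fun q => q.1.1.1.left_lt_right i) fun q => q.1.2)
    · simpa only [hji, if_false] using continuous_const
  have hjoint := continuous_prod_of_discrete_left
    (f := fun q : Fin d × (exteriorPoints i × Circle) => if q.1 = i then
      L (exteriorKernel (q.2.1.1.1.left i) (q.2.1.1.1.right i) q.2.1.1.2 q.2.2) else 0) |>.2 hj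
  exact hjoint.comp (f := fun q : exteriorPoints i × (Fin d × Circle) =>
    (q.2.1, q.1, q.2.2)) (by fun_prop)

/-- The composite of the real-linear functional `L` with the kernel representing the `i`-th Szegő
function at a point outside the `i`-th interval, extended by zero to the other circles. -/
def exteriorKernelMap (L : ℂ →L[ℝ] ℝ) (i : Fin d) :
    C(exteriorPoints i, C(Fin d × Circle, ℝ)) :=
  ContinuousMap.curry ⟨_, continuous_exteriorKernel_exteriorPoints L i⟩

theorem densityFunctional_exteriorKernelMap (L : ℂ →L[ℝ] ℝ) {i : Fin d} (q : exteriorPoints i)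
    {u : Fin d × Circle → ℝ} (hu : Integrable u (familyMeasure d)) :
    densityFunctional (familyMeasure d) (hu.toL1 u) (exteriorKernelMap L i q) =
      L (∫ e, exteriorKernel (q.1.1.left i) (q.1.1.right i) q.1.2 e * (u (i, e) : ℂ)) := by
  have hk := continuous_exteriorKernel (q.1.1.left_lt_right i) q.2
  have hint : Integrable fun e =>
      exteriorKernel (q.1.1.left i) (q.1.1.right i) q.1.2 e * (u (i, e) : ℂ) :=
    (integrable_familyMeasure_iff.1 hu i).ofReal.bdd_mul hk.aestronglyMeasurable
      (.of_forall fun e => (⟨_, hk⟩ : C(Circle, ℂ)).norm_coe_le_norm e)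
  have hmul : Integrable (fun t => u t * exteriorKernelMap L i q t) (familyMeasure d) :=
    hu.mul_bdd (exteriorKernelMap L i q).continuous.aestronglyMeasurable
      (.of_forall fun t => (exteriorKernelMap L i q).norm_coe_le_norm t)
  rw [densityFunctional_toL1_apply, integral_familyMeasure hmul, ← L.integral_comp_comm hint,
    Finset.sum_eq_single i]
  · refine integral_congr_ae (.of_forall fun e => ?_)
    simp [exteriorKernelMap, mul_comm _ (u (i, e) : ℂ), ← Complex.real_smul]
  · intro j _ hj
    simp [exteriorKernelMap, hj]
  · simp

end IntervalSystem

open IntervalSystem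

theorem IsSzegoVector.apply_eq_exp_densityFunctional {p : IntervalSystem d}
    {v g : Fin d → ℝ → ℝ} {S : Fin d → ℂ → ℂ} (h : IsSzegoVector d p.left p.right v g S)
    {i : Fin d} {z : ℂ} (hz : (p, z) ∈ exteriorPoints i) :
    S i z = Complex.exp
      (densityFunctional (familyMeasure d) (h.integrable_log.toL1 _)
          (exteriorKernelMap Complex.reCLM i ⟨_, hz⟩) +
        densityFunctional (familyMeasure d) (h.integrable_log.toL1 _)
          (exteriorKernelMap Complex.imCLM i ⟨_, hz⟩) * Complex.I) := by
  rw [h.apply_eq_exp_integral, densityFunctional_exteriorKernelMap,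
    densityFunctional_exteriorKernelMap, Complex.reCLM_apply, Complex.imCLM_apply,
    Complex.re_add_im]

variable {α : Type*} {l : Filter α} [l.IsCountablyGenerated] {p : α → IntervalSystem d}
  {p₀ : IntervalSystem d} {w : Fin d → ℝ → ℝ}

theorem tendsto_integral_abs_supportIndicator_weight_sub (hw : ∀ i, Measurable (w i))
    (hp : Tendsto p l (𝓝 p₀)) :
    Tendsto (fun n => ∫ x, |supportIndicator ((p n).pullback ((p n).weight w)) x -
      supportIndicator (p₀.pullback (p₀.weight w)) x| ∂familyMeasure d) l (𝓝 0) := by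
  have hsupp : ∀ q : IntervalSystem d, ∀ᵐ t ∂familyMeasure d,
      supportIndicator (q.pullback (q.weight w)) t =
        supportIndicator (w t.1) (intervalPoint (q.left t.1) (q.right t.1) t.2) := fun q =>
    ae_familyMeasure_iff.2 fun i => ae_circle_im_ne_zero.mono fun e he =>
      supportIndicator_arcsineWeight_intervalPoint (q.left_lt_right i) (w i) he
  refine (tendsto_integral_abs_sub_familyMeasure
    (fun n i => integrable_supportIndicator_comp (hw i) ((p n).left i) ((p n).right i))
    (fun i => integrable_supportIndicator_comp (hw i) (p₀.left i) (p₀.right i)) fun i =>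
      tendsto_integral_abs_comp_intervalPoint_sub (p₀.left_lt_right i)
        (fun n => (p n).left_lt_right i) (((continuous_left i).tendsto p₀).comp hp)
        (((continuous_right i).tendsto p₀).comp hp) (measurable_supportIndicator (hw i))
        (abs_supportIndicator_le_one (w i))).congr fun n => integral_congr_ae ?_
  filter_upwards [hsupp (p n), hsupp p₀] with t ht ht₀
  rw [ht, ht₀]

theorem tendsto_integral_abs_half_log_weight_sub (hw : ∀ i, Measurable (w i))
    (hp : Tendsto p l (𝓝 p₀))
    (hint : ∀ n, Integrable (fun t => 1 / 2 * Real.log ((p n).pullback ((p n).weight w) t))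
      (familyMeasure d))
    (hint₀ : Integrable (fun t => 1 / 2 * Real.log (p₀.pullback (p₀.weight w) t))
      (familyMeasure d))
    (h : ∀ i, Tendsto (fun n => ∫ x, |Real.log (w i x) - Real.log (w i (affIcc (p₀.left i)
      (p₀.right i) ((p n).left i) ((p n).right i) x))| ∂arcsineMeasure (p₀.left i) (p₀.right i))
      l (𝓝 0)) :
    Tendsto (fun n => ∫ t, |1 / 2 * Real.log ((p n).pullback ((p n).weight w) t) -
      1 / 2 * Real.log (p₀.pullback (p₀.weight w) t)| ∂familyMeasure d) l (𝓝 0) := by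
  rw [integrable_familyMeasure_iff] at hint₀
  simp only [integrable_familyMeasure_iff] at hint
  refine tendsto_integral_abs_sub_familyMeasure hint hint₀ fun i => ?_
  simp only [pullback, weight] at hint hint₀ ⊢
  exact tendsto_integral_abs_half_log_arcsineWeight_sub (p₀.left_lt_right i)
    (fun n => (p n).left_lt_right i) (((continuous_left i).tendsto p₀).comp hp)
    (((continuous_right i).tendsto p₀).comp hp) (hw i) (fun n => hint n i) (hint₀ i) (h i)

variable {g : α → Fin d → ℝ → ℝ} {g₀ : Fin d → ℝ → ℝ} {S : α → Fin d → ℂ → ℂ}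
  {S₀ : Fin d → ℂ → ℂ}

theorem tendsto_densityFunctional_log (hw : ∀ i, Measurable (w i)) (hp : Tendsto p l (𝓝 p₀))
    (h : ∀ i, Tendsto (fun n => ∫ x, |Real.log (w i x) - Real.log (w i (affIcc (p₀.left i)
      (p₀.right i) ((p n).left i) ((p n).right i) x))| ∂arcsineMeasure (p₀.left i) (p₀.right i))
      l (𝓝 0))
    (hS₀ : IsSzegoVector d p₀.left p₀.right (p₀.weight w) g₀ S₀)
    (hS : ∀ n, IsSzegoVector d (p n).left (p n).right ((p n).weight w) (g n) (S n)) :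
    Tendsto (fun n => densityFunctional (familyMeasure d) ((hS n).integrable_log.toL1 _)) l
      (𝓝 (densityFunctional (familyMeasure d) (hS₀.integrable_log.toL1 _))) := by
  have hv : ∀ (q : IntervalSystem d) i, Measurable (q.weight w i) := fun q i =>
    measurable_arcsineWeight (hw i) _ _
  have hθ := fun q => measurable_supportIndicator (measurable_pullback (p := q) (hv q))
  have hθ_int := fun q => Integrable.of_bound (μ := familyMeasure d)
    (hθ q).aestronglyMeasurable 1 (.of_forall (abs_supportIndicator_le_one _))
  have hF := fun n => (hS n).integrable_half_log_weight (hv (p n))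
  have hF₀ := hS₀.integrable_half_log_weight (hv p₀)
  exact tendsto_densityFunctional_of_ae_eq (κ := fun n => interactionMap d (p n))
    (κ₀ := interactionMap d p₀) _ hF (fun n => hθ_int (p n)) _ hF₀ (hθ_int p₀)
    (fun n => (hS n).log_ae_eq) hS₀.log_ae_eq
    (tendsto_integral_abs_half_log_weight_sub hw hp hF hF₀ h)
    (tendsto_integral_abs_supportIndicator_weight_sub hw hp)
    (((interactionMap d).continuous.tendsto p₀).comp hp)
    fun ψ => p₀.eq_zero_of_eq_integral_interaction (hθ p₀) (supportIndicator_mem_Icc _)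

theorem szego_vector_locally_uniform_convergence_general (hw : ∀ i, Measurable (w i))
    (hp : Tendsto p l (𝓝 p₀))
    (h : ∀ i, Tendsto (fun n => ∫ x, |Real.log (w i x) - Real.log (w i (affIcc (p₀.left i)
      (p₀.right i) ((p n).left i) ((p n).right i) x))| ∂arcsineMeasure (p₀.left i) (p₀.right i))
      l (𝓝 0))
    (hS₀ : IsSzegoVector d p₀.left p₀.right (p₀.weight w) g₀ S₀)
    (hS : ∀ n, IsSzegoVector d (p n).left (p n).right ((p n).weight w) (g n) (S n))
    (i : Fin d) : TendstoLocallyUniformlyOn (fun n => S n i) (S₀ i) l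
      (Complex.ofReal '' Icc (p₀.left i) (p₀.right i))ᶜ :=
  tendstoLocallyUniformlyOn_of_continuous (isOpen_exteriorPoints i)
    (G := fun q : (C(Fin d × Circle, ℝ) →L[ℝ] ℝ) × exteriorPoints i =>
      Complex.exp (q.1 (exteriorKernelMap Complex.reCLM i q.2) +
        q.1 (exteriorKernelMap Complex.imCLM i q.2) * Complex.I))
    (by fun_prop) hp (tendsto_densityFunctional_log hw hp h hS₀ hS)
    (fun n _ hz => (hS n).apply_eq_exp_densityFunctional hz)
    fun _ hz => hS₀.apply_eq_exp_densityFunctional hz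

end Convergence

/-- Proposition 3.2: locally uniform convergence of Szegő-vector functions
under convergence of the intervals, for uniformly Szegő measures. -/
theorem szego_vector_locally_uniform_convergence
    (d : ℕ) (hd : 1 ≤ d) (A B : Fin d → ℝ) (hAB : ∀ i, A i < B i)
    (hdisj : ∀ i j, i ≠ j → Disjoint (Set.Icc (A i) (B i)) (Set.Icc (A j) (B j)))
    (μ : Fin d → Measure ℝ)
    (hfin : ∀ i, IsFiniteMeasure (μ i))
    (hbdd : ∀ i, Bornology.IsBounded (msupp (μ i)))
    (hsub : ∀ i, Set.Icc (A i) (B i) ⊆ convHullSupp (μ i))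
    -- `μ_i ∈ USz(Δ_i)`
    (hUSz : ∀ i, USzCond (μ i) (A i) (B i))
    -- intervals `Δ_{n,i} ⊆ Δ(μ_i)`, pairwise disjoint, converging to `Δ_i`
    (An Bn : ℕ → Fin d → ℝ)
    (hABn : ∀ n i, An n i < Bn n i)
    (hdisjn : ∀ n, ∀ i j, i ≠ j →
      Disjoint (Set.Icc (An n i) (Bn n i)) (Set.Icc (An n j) (Bn n j)))
    (hsubn : ∀ n i, Set.Icc (An n i) (Bn n i) ⊆ convHullSupp (μ i))
    (hconvA : ∀ i, Tendsto (fun n => An n i) atTop (𝓝 (A i)))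
    (hconvB : ∀ i, Tendsto (fun n => Bn n i) atTop (𝓝 (B i)))
    -- the Szegő vectors for `Δ⃗` and for each `Δ⃗_n`
    (g : Fin d → ℝ → ℝ) (S : Fin d → ℂ → ℂ)
    (hS : IsSzegoVector d A B (fun i => vDens (μ i) (A i) (B i)) g S)
    (gn : ℕ → Fin d → ℝ → ℝ) (Sn : ℕ → Fin d → ℂ → ℂ)
    (hSn : ∀ n, IsSzegoVector d (An n) (Bn n)
      (fun i => vDens (μ i) (An n i) (Bn n i)) (gn n) (Sn n)) :
    ∀ i, TendstoLocallyUniformlyOn (fun n z => Sn n i z) (S i) atTop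
      (Complex.ofReal '' Set.Icc (A i) (B i))ᶜ := by
  let p₀ : IntervalSystem d := ⟨(A, B), hAB, fun i j => hdisj i j⟩
  let p : ℕ → IntervalSystem d := fun n => ⟨(An n, Bn n), hABn n, fun i j => hdisjn n i j⟩
  have hp : Tendsto p atTop (𝓝 p₀) := tendsto_subtype_rng.2
    ((tendsto_pi_nhds.2 hconvA).prodMk_nhds (tendsto_pi_nhds.2 hconvB))
  exact szego_vector_locally_uniform_convergence_general
    (fun i => (Measure.measurable_rnDeriv (μ i) volume).ennreal_toReal) hp
    (fun i => ((hUSz i).2 _ _ (fun n => hABn n i) (fun n => hsubn n i) (hconvA i) (hconvB i)).2)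
    hS hSn

end
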